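/- arXiv:2209.01581 — 8 statements merged into one kernel-verified Lean document; each statement's English description precedes it below -/
import Mathlib

section
/- Let k be an algebraically closed field of characteristic zero, B a finitely generated k-algebra that is an integral domain, K the algebraic closure of the fraction field of B, and f ∈ B[x] a monic polynomial. Let f₁,…,fₛ ∈ B[x]_f ⊆ K(x) be logarithmically independent over (K(x), d/dx). Then there exists a finitely generated subgroup Γ of the additive group (B,+) such that for every k-algebra homomorphism c : B → k that is injective on Γ, the specializations f₁^c,…,fₛ^c ∈ k(x) are logarithmically independent over (k(x), d/dx). -/
/-- A derivation (as a bare function): additive and satisfying the Leibniz rule. -/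
def IsDerivationFun {R : Type*} [CommRing R] (δ : R → R) : Prop :=
  (∀ a b : R, δ (a + b) = δ a + δ b) ∧ (∀ a b : R, δ (a * b) = a * δ b + δ a * b)

/-- Elements `f 0, …, f (s-1)` of a differential field `(F, δ)` are logarithmically
independent over `F` if the only integers `d 0, …, d (s-1)` for which there exists
`a ∈ F, a ≠ 0` with `∑ i, d i • f i = δ a / a` are `d 0 = ⋯ = d (s-1) = 0`. -/
def LogIndep {F : Type*} [Field F] (δ : F → F) {s : ℕ} (f : Fin s → F) : Prop :=
  ∀ (d : Fin s → ℤ) (a : F), a ≠ 0 → (∑ i, (d i : F) * f i) = δ a / a → ∀ i, d i = 0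

namespace LogSpec
open Polynomial

theorem extend_hom {k B S : Type*} [Field k] [IsAlgClosed k] [CommRing B] [Algebra k B]
    [CommRing S] [Algebra B S] [Algebra.IsIntegral B S]
    (hinj : Function.Injective (algebraMap B S)) (c : B →ₐ[k] k) :
    ∃ c' : S →+* k, ∀ b, c' (algebraMap B S b) = c b := by
  have hsurj : Function.Surjective (c : B →+* k) := fun x => ⟨algebraMap k B x, by simp⟩
  have : (RingHom.ker (c : B →+* k)).IsMaximal := RingHom.ker_isMaximal_of_surjective _ hsurj
  obtain ⟨Q, hQ, hQc⟩ := Ideal.exists_ideal_over_maximal_of_isIntegral (S := S)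
    (RingHom.ker (c : B →+* k)) (by
      rw [(RingHom.injective_iff_ker_eq_bot _).mp hinj]; exact bot_le)
  let ψ : B →+* S ⧸ Q := (Ideal.Quotient.mk Q).comp (algebraMap B S)
  let φ : k →+* S ⧸ Q := ψ.comp (algebraMap k B)
  have hψ : ∀ b, ψ b = φ (c b) := by
    intro b
    have : b - algebraMap k B (c b) ∈ Q.comap (algebraMap B S) := by
      rw [hQc, RingHom.mem_ker]; simp
    rw [Ideal.mem_comap, ← Ideal.Quotient.eq_zero_iff_mem] at this
    have h2 : ψ (b - algebraMap k B (c b)) = 0 := this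
    rw [map_sub, sub_eq_zero] at h2
    exact h2
  let _ : Algebra k (S ⧸ Q) := φ.toAlgebra
  have : Algebra.IsIntegral k (S ⧸ Q) := by
    constructor
    intro x
    obtain ⟨s, rfl⟩ := Ideal.Quotient.mk_surjective x
    obtain ⟨p, hp, hps⟩ := Algebra.IsIntegral.isIntegral (R := B) s
    refine ⟨p.map (c : B →+* k), hp.map _, ?_⟩
    rw [eval₂_map]
    have : (algebraMap k (S ⧸ Q)).comp (c : B →+* k) = ψ := by
      ext b; exact (hψ b).symm
    rw [this, ← Polynomial.hom_eval₂, hps, map_zero]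
  have hbij := IsAlgClosed.algebraMap_bijective_of_isIntegral (k := k) (K := S ⧸ Q)
  let e := RingEquiv.ofBijective _ hbij
  refine ⟨(e.symm : (S ⧸ Q) →+* k).comp (Ideal.Quotient.mk Q), fun b => ?_⟩
  have : e.symm (ψ b) = c b := by
    rw [hψ, RingEquiv.symm_apply_eq]; rfl
  exact this

theorem det_mem_pow {B : Type*} [CommRing B] (P : Submodule ℤ B) {n : Type*} [Fintype n]
    [DecidableEq n] (N : Matrix n n B) (h : ∀ i j, N i j ∈ P) :
    N.det ∈ P ^ Fintype.card n := by
  have key : ∀ (s : Finset n) (g : n → B), (∀ i, g i ∈ P) → ∏ i ∈ s, g i ∈ P ^ s.card := by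
    intro s g hg
    induction s using Finset.induction_on with
    | empty => simp [Submodule.one_eq_span]
    | insert a s ha ih =>
      rw [Finset.prod_insert ha, Finset.card_insert_of_notMem ha, pow_succ']
      exact Submodule.mul_mem_mul (hg a) ih
  rw [Matrix.det_apply]
  refine Submodule.sum_mem _ fun σ _ => ?_
  rw [Units.smul_def]
  exact Submodule.smul_mem _ _ (key _ _ fun i => h _ _)

theorem descend_group {B K : Type*} [CommRing B] [IsDomain B] [Field K]
    [Algebra B K] [Algebra.IsAlgebraic B K] (hBK : Function.Injective (algebraMap B K))
    (t : Finset K) :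
    ∃ Γ : AddSubgroup B, Γ.FG ∧ ∀ γ ∈ AddSubgroup.closure (t : Set K), γ ≠ 0 →
      ∃ b : B, ∃ p : B[X], p.coeff 0 ∈ Γ ∧ p.coeff 0 ≠ 0 ∧ aeval (algebraMap B K b * γ) p = 0 := by
  classical
  have : FaithfulSMul B K := (faithfulSMul_iff_algebraMap_injective B K).mpr hBK
  let A := FractionRing B
  let _ : Algebra A K := FractionRing.liftAlgebra B K
  have : IsScalarTower B A K := FractionRing.isScalarTower_liftAlgebra B K
  have : Algebra.IsAlgebraic A K := (IsFractionRing.comap_isAlgebraic_iff (A := B) (K := A) (C := K)).mp inferInstance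
  let L := IntermediateField.adjoin A (t : Set K)
  have : FiniteDimensional A L := IntermediateField.finiteDimensional_adjoin
    (fun x _ => (Algebra.IsAlgebraic.isAlgebraic x).isIntegral)
  let bs := Module.finBasis A L
  let ι := Fin (Module.finrank A L)
  let μ : L →ₐ[A] Matrix ι ι A := Algebra.leftMulMatrix bs
  have htL : ∀ x ∈ AddSubgroup.closure (t : Set K), x ∈ L := by
    intro x hx
    have : AddSubgroup.closure (t : Set K) ≤ L.toSubfield.toSubring.toAddSubgroup := by
      rw [AddSubgroup.closure_le]
      exact fun y hy => IntermediateField.subset_adjoin A _ hy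
    exact this hx
  obtain ⟨b, hb⟩ := IsLocalization.exist_integer_multiples_of_finite (nonZeroDivisors B)
    (fun x : t × ι × ι => μ ⟨x.1, htL _ (AddSubgroup.subset_closure x.1.2)⟩ x.2.1 x.2.2)
  choose z hz using hb
  let P : Submodule ℤ B := Submodule.span ℤ (Set.range z)
  have hP : P.FG := Submodule.fg_span (Set.finite_range z)
  refine ⟨(P ^ Fintype.card ι).toAddSubgroup, ?_, ?_⟩
  · rw [← Submodule.fg_iff_addSubgroup_fg]
    exact hP.pow _
  intro γ hγ hγ0
  have hent : ∀ γ (hγ : γ ∈ AddSubgroup.closure (t : Set K)), ∀ i j, ∃ w ∈ P,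
      algebraMap B A w = algebraMap B A b * μ ⟨γ, htL _ hγ⟩ i j := by
    intro γ hγ i j
    induction hγ using AddSubgroup.closure_induction with
    | mem x hx =>
      refine ⟨z (⟨x, hx⟩, i, j), Submodule.subset_span ⟨_, rfl⟩, ?_⟩
      rw [hz, Algebra.smul_def]
    | zero =>
      refine ⟨0, P.zero_mem, ?_⟩
      have : (⟨0, htL _ (AddSubgroup.zero_mem _)⟩ : L) = 0 := rfl
      rw [this]; simp
    | add x y hx hy ihx ihy =>
      obtain ⟨u, hu, hu'⟩ := ihx
      obtain ⟨v, hv, hv'⟩ := ihy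
      refine ⟨u + v, P.add_mem hu hv, ?_⟩
      have : (⟨x + y, htL _ (AddSubgroup.add_mem _ hx hy)⟩ : L) = ⟨x, htL _ hx⟩ + ⟨y, htL _ hy⟩ := rfl
      rw [this, map_add, map_add, hu', hv', Matrix.add_apply, mul_add]
    | neg x hx ihx =>
      obtain ⟨u, hu, hu'⟩ := ihx
      refine ⟨-u, P.neg_mem hu, ?_⟩
      have : (⟨-x, htL _ (AddSubgroup.neg_mem _ hx)⟩ : L) = - ⟨x, htL _ hx⟩ := rfl
      rw [this, map_neg, map_neg, hu', Matrix.neg_apply, mul_neg]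
  choose N hNP hN using hent γ hγ
  let N' : Matrix ι ι B := Matrix.of N
  let g : L := ⟨γ, htL _ hγ⟩
  let g' : L := algebraMap A L (algebraMap B A b) * g
  have hmap : N'.map (algebraMap B A) = μ g' := by
    have : μ g' = (algebraMap B A b) • μ g := by
      rw [← map_smul, Algebra.smul_def]
    rw [this]
    ext i j
    simp only [Matrix.map_apply, Matrix.smul_apply, smul_eq_mul]
    exact hN i j
  have hbA : algebraMap B A b ≠ 0 := by
    simpa using nonZeroDivisors.ne_zero b.2
  have hg0 : g ≠ 0 := fun h => hγ0 (congrArg Subtype.val h)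
  have hg'0 : g' ≠ 0 := mul_ne_zero (by simp) hg0
  have hchar : N'.charpoly.map (algebraMap B A) = (μ g').charpoly := by
    rw [← hmap]; exact (Matrix.charpoly_map _ _).symm
  have hdet : N'.det ≠ 0 := by
    intro h
    have h1 : (μ g').det = 0 := by
      rw [← hmap, ← RingHom.mapMatrix_apply, ← RingHom.map_det, h, map_zero]
    rw [← Algebra.norm_eq_matrix_det bs] at h1
    exact hg'0 (Algebra.norm_eq_zero_iff.mp h1)
  have hcoeff : N'.charpoly.coeff 0 = (-1) ^ Fintype.card ι * N'.det := by
    rw [Matrix.det_eq_sign_charpoly_coeff, ← mul_assoc, ← mul_pow]; simp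
  refine ⟨b, N'.charpoly, ?_, ?_, ?_⟩
  · rw [hcoeff, Submodule.mem_toAddSubgroup]
    have := det_mem_pow P N' (fun i j => hNP i j)
    rcases neg_one_pow_eq_or B (Fintype.card ι) with h | h <;> rw [h]
    · simpa using this
    · simpa using this
  · rw [hcoeff]
    exact mul_ne_zero (pow_ne_zero _ (by simp)) hdet
  · have h1 : aeval g' (μ g').charpoly = 0 := by
      apply Algebra.leftMulMatrix_injective bs
      rw [← Polynomial.aeval_algHom_apply, map_zero]
      exact Matrix.aeval_self_charpoly _
    have h2 := congrArg (algebraMap L K) h1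
    rw [map_zero, ← Polynomial.aeval_algebraMap_apply, ← hchar,
      Polynomial.aeval_map_algebraMap] at h2
    have h3 : algebraMap L K g' = algebraMap B K b * γ := by
      rw [IsScalarTower.algebraMap_apply B A K]; rfl
    rw [h3] at h2
    exact h2

section logder
variable {E : Type*} [Field E] {D : E → E}

theorem ld_mul (hD : IsDerivationFun D) {a b : E} (ha : a ≠ 0) (hb : b ≠ 0) :
    D (a * b) / (a * b) = D a / a + D b / b := by
  rw [hD.2]; field_simp; ring

theorem ld_one (hD : IsDerivationFun D) : D 1 = 0 := by
  have := hD.2 1 1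
  simpa using this

theorem ld_inv (hD : IsDerivationFun D) {a : E} (ha : a ≠ 0) :
    D a⁻¹ / a⁻¹ = - (D a / a) := by
  have h := ld_mul hD ha (inv_ne_zero ha)
  rw [mul_inv_cancel₀ ha, ld_one hD, zero_div] at h
  linear_combination -h

theorem ld_pow (hD : IsDerivationFun D) {a : E} (ha : a ≠ 0) (n : ℕ) :
    D (a ^ n) / a ^ n = n * (D a / a) := by
  induction n with
  | zero => simp [ld_one hD]
  | succ n ih => rw [pow_succ, ld_mul hD (pow_ne_zero _ ha) ha, ih]; push_cast; ring

theorem ld_zpow (hD : IsDerivationFun D) {a : E} (ha : a ≠ 0) (n : ℤ) :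
    D (a ^ n) / a ^ n = n * (D a / a) := by
  obtain ⟨m, rfl | rfl⟩ := n.eq_nat_or_neg
  · simpa using ld_pow hD ha m
  · rw [zpow_neg, ld_inv hD (zpow_ne_zero _ ha)]
    have := ld_pow hD ha m
    simp only [zpow_natCast, Int.cast_neg, Int.cast_natCast, this]; ring

theorem ld_prod (hD : IsDerivationFun D) {ι : Type*} (s : Finset ι) (a : ι → E)
    (ha : ∀ i ∈ s, a i ≠ 0) :
    D (∏ i ∈ s, a i) / ∏ i ∈ s, a i = ∑ i ∈ s, D (a i) / a i := by
  classical
  induction s using Finset.induction_on with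
  | empty => simp [ld_one hD]
  | insert i s hi ih =>
    have h1 : ∀ j ∈ s, a j ≠ 0 := fun j hj => ha j (Finset.mem_insert_of_mem hj)
    rw [Finset.prod_insert hi, Finset.sum_insert hi,
      ld_mul hD (ha i (Finset.mem_insert_self _ _)) (Finset.prod_ne_zero_iff.mpr h1), ih h1]

end logder

section rat
variable {k : Type*} [Field k] {D : RatFunc k → RatFunc k}

theorem XC_ne (β : k) : (RatFunc.X - RatFunc.C β : RatFunc k) ≠ 0 := by
  have : (RatFunc.X - RatFunc.C β : RatFunc k) = algebraMap k[X] (RatFunc k) (X - C β) := by simp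
  rw [this]
  exact RatFunc.algebraMap_ne_zero (X_sub_C_ne_zero β)

theorem ld_XC (hD : IsDerivationFun D) (hC : ∀ a : k, D (RatFunc.C a) = 0)
    (hX : D RatFunc.X = 1) (β : k) : D (RatFunc.X - RatFunc.C β) = 1 := by
  have := hD.1 (RatFunc.X - RatFunc.C β) (RatFunc.C β)
  rw [sub_add_cancel, hX, hC, add_zero] at this
  exact this.symm

/-- logarithmic derivatives have simple poles with integral residues -/
theorem ld_form [IsAlgClosed k] (hD : IsDerivationFun D) (hC : ∀ a : k, D (RatFunc.C a) = 0)
    (hX : D RatFunc.X = 1) (a : RatFunc k) (ha : a ≠ 0) :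
    ∃ e : k →₀ ℤ, D a / a = e.sum fun β n => (n : RatFunc k) * (RatFunc.X - RatFunc.C β)⁻¹ := by
  have hadd : ∀ e e' : k →₀ ℤ,
      ((e + e').sum fun β n => (n : RatFunc k) * (RatFunc.X - RatFunc.C β)⁻¹) =
      (e.sum fun β n => (n : RatFunc k) * (RatFunc.X - RatFunc.C β)⁻¹) +
      (e'.sum fun β n => (n : RatFunc k) * (RatFunc.X - RatFunc.C β)⁻¹) := by
    intro e e'
    apply Finsupp.sum_add_index'
    · simp
    · intros; push_cast; ring
  have hneg : ∀ e : k →₀ ℤ,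
      ((-e).sum fun β n => (n : RatFunc k) * (RatFunc.X - RatFunc.C β)⁻¹) =
      -(e.sum fun β n => (n : RatFunc k) * (RatFunc.X - RatFunc.C β)⁻¹) := by
    intro e
    have := hadd e (-e)
    rw [add_neg_cancel, Finsupp.sum_zero_index] at this
    linear_combination -this
  have hms : ∀ M : Multiset k, ∃ e : k →₀ ℤ,
      D (M.map fun β => RatFunc.X - RatFunc.C β).prod /
        (M.map fun β => RatFunc.X - RatFunc.C β).prod =
        e.sum fun β n => (n : RatFunc k) * (RatFunc.X - RatFunc.C β)⁻¹ := by
    intro M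
    induction M using Multiset.induction_on with
    | empty => exact ⟨0, by simp [ld_one hD]⟩
    | cons β M ih =>
      obtain ⟨e, he⟩ := ih
      refine ⟨Finsupp.single β 1 + e, ?_⟩
      rw [hadd, ← he, Multiset.map_cons, Multiset.prod_cons, ld_mul hD (XC_ne β),
        ld_XC hD hC hX, Finsupp.sum_single_index] 
      · simp
      · simp
      · intro h0
        obtain ⟨x, -, hx⟩ := Multiset.mem_map.mp (Multiset.prod_eq_zero_iff.mp h0)
        exact XC_ne x hx
  have hpoly : ∀ p : k[X], p ≠ 0 → ∃ e : k →₀ ℤ,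
      D (algebraMap k[X] (RatFunc k) p) / (algebraMap k[X] (RatFunc k) p) =
        e.sum fun β n => (n : RatFunc k) * (RatFunc.X - RatFunc.C β)⁻¹ := by
    intro p hp
    obtain ⟨e, he⟩ := hms p.roots
    refine ⟨e, ?_⟩
    have h1 := (IsAlgClosed.splits p).eq_prod_roots
    have h2 : algebraMap k[X] (RatFunc k) p = RatFunc.C p.leadingCoeff *
        (p.roots.map fun β => RatFunc.X - RatFunc.C β).prod := by
      conv_lhs => rw [h1]
      rw [map_mul, RatFunc.algebraMap_C, map_multiset_prod, Multiset.map_map]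
      congr 2
      apply Multiset.map_congr rfl
      intro x _
      simp
    have h3 : algebraMap k[X] (RatFunc k) p ≠ 0 := RatFunc.algebraMap_ne_zero hp
    rw [h2] at h3 ⊢
    rw [ld_mul hD (left_ne_zero_of_mul h3) (right_ne_zero_of_mul h3), hC, he]
    simp
  obtain ⟨e₁, h₁⟩ := hpoly a.num (RatFunc.num_ne_zero ha)
  obtain ⟨e₂, h₂⟩ := hpoly a.denom a.denom_ne_zero
  refine ⟨e₁ + -e₂, ?_⟩
  have n1 := RatFunc.algebraMap_ne_zero (RatFunc.num_ne_zero ha)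
  have n2 := RatFunc.algebraMap_ne_zero a.denom_ne_zero
  rw [hadd, hneg, ← h₁, ← h₂, ← ld_inv hD n2, ← ld_mul hD n1 (inv_ne_zero n2), ← div_eq_mul_inv,
    RatFunc.num_div_denom]

/-- The poles of a logarithmic derivative `g / f` are roots of `f`. -/
theorem ld_poles [CharZero k] (e : k →₀ ℤ) (f g : k[X])
    (h : algebraMap k[X] (RatFunc k) f *
      (e.sum fun β n => (n : RatFunc k) * (RatFunc.X - RatFunc.C β)⁻¹) =
      algebraMap k[X] (RatFunc k) g) :
    ∀ β ∈ e.support, f.eval β = 0 := by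
  classical
  intro β hβ
  have hX : ∀ γ : k, (RatFunc.X - RatFunc.C γ : RatFunc k) =
      algebraMap k[X] (RatFunc k) (X - C γ) := by simp
  have h1 : f * ∑ γ ∈ e.support, (e γ : k[X]) * ∏ δ ∈ e.support.erase γ, (X - C δ) =
      g * ∏ δ ∈ e.support, (X - C δ) := by
    apply RatFunc.algebraMap_injective k
    rw [map_mul, map_mul, ← h, mul_assoc, map_sum, Finsupp.sum, Finset.sum_mul]
    congr 1
    refine Finset.sum_congr rfl fun γ hγ => ?_
    rw [← Finset.mul_prod_erase _ _ hγ, map_mul, map_mul, ← hX, map_intCast]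
    have := XC_ne γ
    field_simp
  have h2 := congrArg (eval β) h1
  rw [eval_mul, eval_mul, eval_prod, Finset.prod_eq_zero hβ (by simp), mul_zero, eval_finsetSum,
    Finset.sum_eq_single β] at h2
  · rw [eval_mul, eval_prod, mul_eq_zero] at h2
    refine h2.resolve_right ?_
    refine mul_ne_zero ?_ (Finset.prod_ne_zero_iff.mpr fun δ hδ => ?_)
    · simpa using hβ
    · simpa [sub_eq_zero] using (Finset.ne_of_mem_erase hδ).symm
  · intro γ hγ hne
    rw [eval_mul, eval_prod, Finset.prod_eq_zero (Finset.mem_erase.mpr ⟨hne.symm, hβ⟩) (by simp),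
      mul_zero]
  · exact fun h => absurd hβ h
end rat

theorem splits_integralClosure {B K : Type*} [CommRing B] [Field K] [IsAlgClosed K] [Algebra B K]
    (W : B[X]) (hW : W.Monic) :
    ∃ M : Multiset (integralClosure B K),
      W.map (algebraMap B (integralClosure B K)) = (M.map fun x => X - C x).prod := by
  have h1 := (IsAlgClosed.splits (W.map (algebraMap B K))).eq_prod_roots
  rw [(hW.map _).leadingCoeff, C_1, one_mul] at h1
  have hint : ∀ x ∈ (W.map (algebraMap B K)).roots, x ∈ integralClosure B K := by
    intro x hx
    refine ⟨W, hW, ?_⟩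
    have := (mem_roots'.mp hx).2
    rwa [IsRoot, eval_map] at this
  refine ⟨(W.map (algebraMap B K)).roots.attach.map fun x => ⟨x.1, hint x.1 x.2⟩, ?_⟩
  apply map_injective (algebraMap (integralClosure B K) K) Subtype.val_injective
  rw [map_map, ← IsScalarTower.algebraMap_eq, Multiset.map_map, Polynomial.map_multiset_prod,
    Multiset.map_map]
  conv_lhs => rw [h1, ← Multiset.attach_map_val (W.map (algebraMap B K)).roots, Multiset.map_map]
  congr 1
  apply Multiset.map_congr
  · simp
  · intro x _
    simp only [Function.comp_apply, Polynomial.map_sub, map_X, map_C]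
    rfl

end LogSpec

open LogSpec


/-- **Specialization of logarithmically independent rational functions.**
Let `k` be an algebraically closed field of characteristic zero, `B` a finitely generated
`k`-algebra that is an integral domain, `K` the algebraic closure of the fraction field of `B`,
and `f ∈ B[x]` a monic polynomial.  Let `F 0, …, F (s-1) ∈ B[x]_f ⊆ K(x)` be logarithmically
independent over `(K(x), d/dx)`, the inclusion `B[x]_f ⊆ K(x)` being the map `τ` characterized
by `τ ∘ (B[x] → B[x]_f) = (K[x] → K(x)) ∘ map (B → K)`, and `d/dx` being the unique derivation
`DK` of `K(x)` killing the constants `K` and sending `x` to `1`.  Then there exists a finitely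
generated subgroup `Γ` of the additive group `(B,+)` such that for every `k`-algebra
homomorphism `c : B → k` that is injective on `Γ`, the specializations
`(F 0)^c, …, (F (s-1))^c ∈ k(x)` (under the extension `σ` of `c` with `c(x) = x`) are
logarithmically independent over `(k(x), d/dx)`. -/
theorem logIndep_specializes_on_adOpen
    (k : Type*) [Field k] [IsAlgClosed k] [CharZero k]
    (B : Type*) [CommRing B] [IsDomain B] [Algebra k B] [Algebra.FiniteType k B]
    (K : Type*) [Field K] [IsAlgClosed K] [CharZero K]
    [Algebra B K] [Algebra.IsAlgebraic B K]
    (hBK : Function.Injective (algebraMap B K))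
    [Algebra k K] [IsScalarTower k B K]
    (f : Polynomial B) (hf : f.Monic)
    (τ : Localization.Away f →+* RatFunc K)
    (hτ : τ.comp (algebraMap (Polynomial B) (Localization.Away f)) =
      (algebraMap (Polynomial K) (RatFunc K)).comp
        (Polynomial.mapRingHom (algebraMap B K)))
    (DK : RatFunc K → RatFunc K) (hDK : IsDerivationFun DK)
    (hDKC : ∀ a : K, DK (RatFunc.C a) = 0) (hDKX : DK RatFunc.X = 1)
    {s : ℕ} (F : Fin s → Localization.Away f)
    (hindep : LogIndep DK (fun i => τ (F i))) :
    ∃ Γ : AddSubgroup B, Γ.FG ∧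
      ∀ c : B →ₐ[k] k, Set.InjOn c (Γ : Set B) →
        ∀ σ : Localization.Away f →+* RatFunc k,
          σ.comp (algebraMap (Polynomial B) (Localization.Away f)) =
            (algebraMap (Polynomial k) (RatFunc k)).comp
              (Polynomial.mapRingHom (c : B →+* k)) →
          ∀ Dk : RatFunc k → RatFunc k, IsDerivationFun Dk →
            (∀ a : k, Dk (RatFunc.C a) = 0) → Dk RatFunc.X = 1 →
            LogIndep Dk (fun i => σ (F i)) := by
  
  classical
  obtain ⟨⟨W, hWmem⟩, hWF⟩ :=
    IsLocalization.exist_integer_multiples_of_finite (Submonoid.powers f) F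
  choose G hG using hWF
  have hW : W.Monic := by
    obtain ⟨n, rfl⟩ := hWmem
    exact hf.pow n
  have hG' : ∀ i, algebraMap (Polynomial B) (Localization.Away f) W * F i =
      algebraMap (Polynomial B) (Localization.Away f) (G i) := by
    intro i; rw [hG, Algebra.smul_def]
  obtain ⟨M, hM⟩ := splits_integralClosure (K := K) W hW
  have hU : ∀ α : integralClosure B K, ∃ U : Polynomial (integralClosure B K), α ∈ M →
      (Polynomial.X - Polynomial.C α) * U = W.map (algebraMap B (integralClosure B K)) := by
    intro α
    by_cases hα : α ∈ M
    · refine ⟨((M.erase α).map fun x => Polynomial.X - Polynomial.C x).prod, fun _ => ?_⟩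
      rw [hM]
      conv_rhs => rw [← Multiset.cons_erase hα]
      rw [Multiset.map_cons, Multiset.prod_cons]
    · exact ⟨0, fun h => absurd h hα⟩
  choose U hU using hU
  let T : Finset K :=
    (Finset.univ.biUnion fun i => ((G i).map (algebraMap B K)).coeffs) ∪
      (M.toFinset.biUnion fun α => ((U α).map (algebraMap (integralClosure B K) K)).coeffs)
  obtain ⟨Γ, hΓ, hΓT⟩ := descend_group hBK T
  have hTG : ∀ i n, algebraMap B K ((G i).coeff n) ∈ AddSubgroup.closure (T : Set K) := by
    intro i n
    by_cases h0 : algebraMap B K ((G i).coeff n) = 0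
    · rw [h0]; exact zero_mem _
    · refine AddSubgroup.subset_closure (Finset.mem_coe.mpr (Finset.mem_union_left _
        (Finset.mem_biUnion.mpr ⟨i, Finset.mem_univ _, ?_⟩)))
      rw [← Polynomial.coeff_map] at h0 ⊢
      exact Polynomial.coeff_mem_coeffs h0
  have hTU : ∀ α ∈ M, ∀ n, algebraMap (integralClosure B K) K ((U α).coeff n) ∈
      AddSubgroup.closure (T : Set K) := by
    intro α hα n
    by_cases h0 : algebraMap (integralClosure B K) K ((U α).coeff n) = 0
    · rw [h0]; exact zero_mem _
    · refine AddSubgroup.subset_closure (Finset.mem_coe.mpr (Finset.mem_union_right _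
        (Finset.mem_biUnion.mpr ⟨α, Multiset.mem_toFinset.mpr hα, ?_⟩)))
      rw [← Polynomial.coeff_map] at h0 ⊢
      exact Polynomial.coeff_mem_coeffs h0
  refine ⟨Γ, hΓ, ?_⟩
  intro c hc σ hσ Dk hDk hDkC hDkX d a ha hda
  have hBS : Function.Injective (algebraMap B (integralClosure B K)) := by
    intro x y hxy
    apply hBK
    exact congrArg (algebraMap (integralClosure B K) K) hxy
  obtain ⟨c', hc'⟩ := extend_hom hBS c
  have hcc : c'.comp (algebraMap B (integralClosure B K)) = (c : B →+* k) := by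
    ext b; exact hc' b
  obtain ⟨e, he⟩ := ld_form hDk hDkC hDkX a ha
  have hσ' : ∀ p : Polynomial B, σ (algebraMap (Polynomial B) (Localization.Away f) p) =
      algebraMap (Polynomial k) (RatFunc k) (p.map (c : B →+* k)) := fun p => RingHom.congr_fun hσ p
  have hτ' : ∀ p : Polynomial B, τ (algebraMap (Polynomial B) (Localization.Away f) p) =
      algebraMap (Polynomial K) (RatFunc K) (p.map (algebraMap B K)) :=
    fun p => RingHom.congr_fun hτ p
  have hspec : algebraMap (Polynomial k) (RatFunc k) (W.map (c : B →+* k)) *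
      (e.sum fun β n => (n : RatFunc k) * (RatFunc.X - RatFunc.C β)⁻¹) =
      algebraMap (Polynomial k) (RatFunc k)
        (∑ i, (d i : Polynomial k) * (G i).map (c : B →+* k)) := by
    rw [← he, ← hda, map_sum, Finset.mul_sum]
    refine Finset.sum_congr rfl fun i _ => ?_
    rw [map_mul, map_intCast, ← hσ', ← hσ', ← hG', map_mul]
    ring
  have hroot := ld_poles e _ _ hspec
  have hsel : ∀ β : k, ∃ α : integralClosure B K, β ∈ e.support → α ∈ M ∧ c' α = β := by
    intro β
    by_cases hβ : β ∈ e.support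
    · have h1 := hroot β hβ
      rw [← hcc, ← Polynomial.map_map, hM, Polynomial.eval_map, ← Polynomial.coe_eval₂RingHom,
        map_multiset_prod, Multiset.map_map, Multiset.prod_eq_zero_iff, Multiset.mem_map] at h1
      obtain ⟨α, hα, h2⟩ := h1
      refine ⟨α, fun _ => ⟨hα, ?_⟩⟩
      simp only [Function.comp_apply, Polynomial.coe_eval₂RingHom, Polynomial.eval₂_sub,
        Polynomial.eval₂_X, Polynomial.eval₂_C] at h2
      exact (sub_eq_zero.mp h2).symm
    · exact ⟨0, fun h => absurd h hβ⟩
  choose sel hsel using hsel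
  let R : Polynomial (integralClosure B K) :=
    ∑ i, (d i : Polynomial (integralClosure B K)) * (G i).map (algebraMap B (integralClosure B K)) -
      ∑ β ∈ e.support, (e β : Polynomial (integralClosure B K)) * U (sel β)
  have hRc : R.map c' = 0 := by
    apply RatFunc.algebraMap_injective k
    rw [map_zero, Polynomial.map_sub, map_sub, Polynomial.map_sum, Polynomial.map_sum, sub_eq_zero]
    simp only [Polynomial.map_mul, Polynomial.map_intCast, Polynomial.map_map, hcc]
    rw [← hspec, Finsupp.sum, Finset.mul_sum, map_sum]
    refine Finset.sum_congr rfl fun β hβ => ?_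
    obtain ⟨h1, h2⟩ := hsel β hβ
    have h3 := congrArg (fun p => algebraMap (Polynomial k) (RatFunc k) (p.map c')) (hU _ h1)
    simp only [Polynomial.map_mul, Polynomial.map_map, hcc, Polynomial.map_sub, Polynomial.map_X,
      Polynomial.map_C, h2, map_mul, map_sub, RatFunc.algebraMap_X, RatFunc.algebraMap_C] at h3
    rw [← h3, map_mul, map_intCast]
    have := XC_ne β
    field_simp
  have hRT : ∀ n, algebraMap (integralClosure B K) K (R.coeff n) ∈
      AddSubgroup.closure (T : Set K) := by
    intro n
    have : R.coeff n = ∑ i, d i • algebraMap B (integralClosure B K) ((G i).coeff n) -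
        ∑ β ∈ e.support, e β • (U (sel β)).coeff n := by
      simp only [R, Polynomial.coeff_sub, Polynomial.finsetSum_coeff, Polynomial.coeff_intCast_mul,
        Polynomial.coeff_map, zsmul_eq_mul]
    rw [this, map_sub, map_sum, map_sum]
    refine sub_mem (sum_mem fun i _ => ?_) (sum_mem fun β hβ => ?_)
    · rw [map_zsmul, ← IsScalarTower.algebraMap_apply]
      exact zsmul_mem (hTG i n) _
    · rw [map_zsmul]
      exact zsmul_mem (hTU _ (hsel β hβ).1 n) _
  have hR : R = 0 := by
    ext1 n
    rw [Polynomial.coeff_zero]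
    by_contra hne
    have hne' : algebraMap (integralClosure B K) K (R.coeff n) ≠ 0 :=
      fun h => hne (Subtype.ext h)
    obtain ⟨b, p, hpΓ, hp0, hp⟩ := hΓT _ (hRT n) hne'
    have h1 : Polynomial.aeval (algebraMap B (integralClosure B K) b * R.coeff n) p = 0 := by
      apply Subtype.val_injective
      have h := Polynomial.aeval_algebraMap_apply K
        (algebraMap B (integralClosure B K) b * R.coeff n) p
      rw [map_mul, ← IsScalarTower.algebraMap_apply, hp] at h
      exact h.symm
    have h2 := congrArg c' h1
    have h3 : c' (R.coeff n) = 0 := by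
      rw [← Polynomial.coeff_map, hRc, Polynomial.coeff_zero]
    rw [Polynomial.aeval_def, Polynomial.hom_eval₂, map_mul, h3, mul_zero, map_zero,
      Polynomial.eval₂_at_zero, hcc] at h2
    apply hp0
    apply hc hpΓ Γ.zero_mem
    rw [map_zero]
    exact h2
  have hXne : ∀ β, (RatFunc.X - RatFunc.C (sel β : K) : RatFunc K) ≠ 0 := fun β => XC_ne _
  refine hindep d (∏ β ∈ e.support, (RatFunc.X - RatFunc.C (sel β : K)) ^ (e β))
    (Finset.prod_ne_zero_iff.mpr fun β _ => zpow_ne_zero _ (hXne β)) ?_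
  rw [ld_prod hDK _ _ (fun β _ => zpow_ne_zero _ (hXne β))]
  have hWne : algebraMap (Polynomial K) (RatFunc K) (W.map (algebraMap B K)) ≠ 0 :=
    RatFunc.algebraMap_ne_zero (hW.map _).ne_zero
  apply mul_left_cancel₀ hWne
  rw [Finset.mul_sum, Finset.mul_sum]
  have hRK := congrArg (fun p => algebraMap (Polynomial K) (RatFunc K)
    (p.map (algebraMap (integralClosure B K) K))) hR
  simp only [R, Polynomial.map_sub, Polynomial.map_sum, Polynomial.map_mul, Polynomial.map_map,
    Polynomial.map_intCast, map_sub, map_sum, map_mul, map_intCast, Polynomial.map_zero,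
    map_zero, ← IsScalarTower.algebraMap_eq] at hRK
  rw [sub_eq_zero] at hRK
  convert hRK using 1
  · refine Finset.sum_congr rfl fun i _ => ?_
    rw [← hτ', ← hτ', ← hG', map_mul]
    ring
  · refine Finset.sum_congr rfl fun β hβ => ?_
    have h3 := congrArg (fun p => algebraMap (Polynomial K) (RatFunc K)
      (p.map (algebraMap (integralClosure B K) K))) (hU _ (hsel β hβ).1)
    simp only [Polynomial.map_mul, Polynomial.map_map, ← IsScalarTower.algebraMap_eq,
      Polynomial.map_sub, Polynomial.map_X, Polynomial.map_C, map_mul, map_sub,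
      RatFunc.algebraMap_X, RatFunc.algebraMap_C] at h3
    have h4 : (algebraMap (integralClosure B K) K (sel β)) = (sel β : K) := rfl
    rw [h4] at h3
    rw [ld_zpow hDK (hXne β), ld_XC hDK hDKC hDKX, ← h3]
    have := hXne β
    field_simp
end

section
/- Let k be an algebraically closed field of characteristic zero and let B ⊆ B' be integral domains such that B is a finitely generated k-algebra and B' is a finitely generated B-algebra that is algebraic over B (i.e., Frac(B')/Frac(B) is an algebraic field extension). Let φ : Hom_{k-alg}(B',k) → Hom_{k-alg}(B,k) be the restriction map. Then for every finitely generated subgroup Γ' of the additive group (B',+) there exists a finitely generated subgroup Γ of (B,+) such that, setting U = {c ∈ Hom_{k-alg}(B,k) : c is injective on Γ} and U' = {c' ∈ Hom_{k-alg}(B',k) : c' is injective on Γ'}, one has U ⊆ φ(U') and φ⁻¹(U) ⊆ U'. -/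
namespace AdOpenAux

lemma prod_mem_pow {R : Type*} [CommRing R] (M : Submodule ℤ R) {ι : Type*} (s : Finset ι)
    (f : ι → R) (hf : ∀ i ∈ s, f i ∈ M) : ∏ i ∈ s, f i ∈ M ^ s.card := by
  classical
  induction s using Finset.induction_on with
  | empty =>
    rw [Finset.prod_empty, Finset.card_empty, pow_zero]
    exact Submodule.one_le.1 le_rfl
  | insert a s ha ih =>
    rw [Finset.prod_insert ha, Finset.card_insert_of_notMem ha, pow_succ']
    exact Submodule.mul_mem_mul (hf a (by simp)) (ih fun i hi => hf i (by simp [hi]))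

lemma det_mem_pow {R : Type*} [CommRing R] (M : Submodule ℤ R) {ι : Type*} [Fintype ι]
    [DecidableEq ι] (A : Matrix ι ι R) (hA : ∀ i j, A i j ∈ M) :
    A.det ∈ M ^ Fintype.card ι := by
  rw [Matrix.det_apply]
  refine Submodule.sum_mem _ fun σ _ => ?_
  rw [Units.smul_def]
  exact Submodule.smul_mem _ _ (prod_mem_pow M Finset.univ _ fun i _ => hA _ _)

lemma adjugate_mem_pow {R : Type*} [CommRing R] (M : Submodule ℤ R) {ι : Type*} [Fintype ι]
    [DecidableEq ι] (A : Matrix ι ι R) (hA : ∀ i j, A i j ∈ M) (h1 : (1 : R) ∈ M) (i j : ι) :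
    A.adjugate i j ∈ M ^ Fintype.card ι := by
  rw [Matrix.adjugate_apply]
  refine det_mem_pow M _ fun a b => ?_
  rw [Matrix.updateRow_apply]
  split_ifs
  · by_cases h : i = b
    · subst h; simpa using h1
    · simp [Ne.symm h]
  · exact hA _ _

/-- The norm argument over fields. -/
lemma field_norm (K L : Type*) [Field K] [Field L] [Algebra K L] [FiniteDimensional K L]
    (G : Submodule ℤ L) (hG : G.FG) :
    ∃ (N : Submodule ℤ K) (Q : Submodule ℤ L), N.FG ∧ Q.FG ∧
      ∀ g ∈ G, g ≠ 0 → ∃ n ∈ N, n ≠ 0 ∧ ∃ q ∈ Q, algebraMap K L n = g * q := by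
  classical
  let e := Module.finBasis K L
  let A := Algebra.leftMulMatrix e
  let Aℓ : L →ₗ[ℤ] Matrix _ _ K := A.toLinearMap.restrictScalars ℤ
  let ent : Fin (Module.finrank K L) → Fin (Module.finrank K L) → L →ₗ[ℤ] K := fun i j =>
    (Matrix.entryLinearMap ℤ K i j) ∘ₗ Aℓ
  let M : Submodule ℤ K := (⨆ p : Fin (Module.finrank K L) × Fin (Module.finrank K L),
    G.map (ent p.1 p.2)) ⊔ Submodule.span ℤ {1}
  have hM : M.FG := by
    refine Submodule.FG.sup (Submodule.fg_iSup _ fun p => hG.map _) (Submodule.fg_span (by simp))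
  have h1 : (1 : K) ∈ M := Submodule.mem_sup_right (Submodule.mem_span_singleton_self _)
  have hent : ∀ g ∈ G, ∀ i j, A g i j ∈ M := fun g hg i j =>
    Submodule.mem_sup_left (Submodule.mem_iSup_of_mem (i, j) ⟨g, hg, rfl⟩)
  have hd : 0 < Module.finrank K L := Module.finrank_pos
  let j0 : Fin (Module.finrank K L) := ⟨0, hd⟩
  have hj0 : e j0 ≠ 0 := e.ne_zero j0
  let N := M ^ Fintype.card (Fin (Module.finrank K L))
  have hN : N.FG := hM.pow _
  refine ⟨N, N.map ((Algebra.linearMap K L).restrictScalars ℤ) *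
    Submodule.span ℤ (Set.range fun i => e i * (e j0)⁻¹), hN,
    (hN.map _).mul (Submodule.fg_span (Set.finite_range _)), ?_⟩
  intro g hg hg0
  have hinv : A g * A g⁻¹ = 1 := by rw [← map_mul, mul_inv_cancel₀ hg0, map_one]
  have hdet : (A g).det ≠ 0 := by
    intro h
    have := congrArg Matrix.det hinv
    simp [h] at this
  refine ⟨(A g).det, det_mem_pow M _ (hent g hg), hdet,
    ∑ i, algebraMap K L ((A g).adjugate i j0) * (e i * (e j0)⁻¹), ?_, ?_⟩
  · refine Submodule.sum_mem _ fun i _ => Submodule.mul_mem_mul ?_ (Submodule.subset_span ⟨i, rfl⟩)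
    exact ⟨_, adjugate_mem_pow M _ (hent g hg) h1 i j0, rfl⟩
  · have hcol : ∀ i, g * e i = ∑ l, A g l i • e l := by
      intro i
      conv_lhs => rw [← e.sum_repr (g * e i)]
      simp [A, Algebra.leftMulMatrix_eq_repr_mul]
    have key : g * ∑ i, (A g).adjugate i j0 • e i = (A g).det • e j0 := by
      rw [Finset.mul_sum]
      simp_rw [mul_smul_comm, hcol, Finset.smul_sum, smul_smul]
      rw [Finset.sum_comm]
      simp_rw [← Finset.sum_smul]
      have : ∀ l, ∑ i, (A g).adjugate i j0 * A g l i = if l = j0 then (A g).det else 0 := by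
        intro l
        have := congrFun (congrFun (Matrix.mul_adjugate (A g)) l) j0
        rw [Matrix.mul_apply] at this
        simp_rw [mul_comm ((A g).adjugate _ _)]
        rw [this]
        simp [Matrix.one_apply]
      simp [this]
    have : ∑ i, algebraMap K L ((A g).adjugate i j0) * (e i * (e j0)⁻¹)
        = (∑ i, (A g).adjugate i j0 • e i) * (e j0)⁻¹ := by
      rw [Finset.sum_mul]
      refine Finset.sum_congr rfl fun i _ => ?_
      rw [Algebra.smul_def, mul_assoc]
    rw [this, ← mul_assoc, key, Algebra.smul_def, mul_assoc, mul_inv_cancel₀ hj0, mul_one]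

lemma common_denom (R K : Type*) [CommRing R] [IsDomain R] [Field K] [Algebra R K]
    [IsFractionRing R K] (N : Submodule ℤ K) (hN : N.FG) :
    ∃ b : R, b ≠ 0 ∧ ∀ n ∈ N, ∃ x : R, algebraMap R K x = algebraMap R K b * n := by
  obtain ⟨s, rfl⟩ := hN
  obtain ⟨b, hb⟩ := IsLocalization.exist_integer_multiples_of_finset (nonZeroDivisors R) s
  refine ⟨b, nonZeroDivisors.ne_zero b.2, fun n hn => ?_⟩
  induction hn using Submodule.span_induction with
  | mem x hx =>
    obtain ⟨y, hy⟩ := hb x hx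
    exact ⟨y, by rw [hy, Algebra.smul_def]⟩
  | zero => exact ⟨0, by simp⟩
  | add x y _ _ hx hy =>
    obtain ⟨u, hu⟩ := hx
    obtain ⟨v, hv⟩ := hy
    exact ⟨u + v, by rw [map_add, hu, hv, mul_add]⟩
  | smul a x _ hx =>
    obtain ⟨u, hu⟩ := hx
    exact ⟨a • u, by rw [map_zsmul, hu, mul_smul_comm]⟩

lemma norm_domain (B B' : Type*) [CommRing B] [IsDomain B] [CommRing B'] [IsDomain B']
    [Algebra B B'] (hinj : Function.Injective (algebraMap B B'))
    [Algebra.FiniteType B B'] [Algebra.IsAlgebraic B B']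
    (G : Submodule ℤ B') (hG : G.FG) :
    ∃ N : Submodule ℤ B, N.FG ∧ ∀ g ∈ G, g ≠ 0 → ∃ n ∈ N, n ≠ 0 ∧ g ∣ algebraMap B B' n := by
  have : FaithfulSMul B B' := (faithfulSMul_iff_algebraMap_injective B B').2 hinj
  let K := FractionRing B
  let L := FractionRing B'
  let : Algebra K L := FractionRing.liftAlgebra B L
  have : IsScalarTower B K L := FractionRing.isScalarTower_liftAlgebra B L
  have : Algebra.IsAlgebraic B' L := IsLocalization.isAlgebraic L (nonZeroDivisors B')
  have : Algebra.IsAlgebraic B L := Algebra.IsAlgebraic.trans B B' L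
  have : Algebra.IsAlgebraic K L := Algebra.IsAlgebraic.extendScalars (R := B) (IsFractionRing.injective B K)
  have : Algebra.EssFiniteType B' L := Algebra.EssFiniteType.of_isLocalization _ (nonZeroDivisors B')
  have : Algebra.EssFiniteType B L := Algebra.EssFiniteType.comp B B' L
  have : Algebra.EssFiniteType K L := Algebra.EssFiniteType.of_comp B K L
  have : FiniteDimensional K L := Algebra.finite_of_essFiniteType_of_isAlgebraic
  let f : B →ₗ[ℤ] K := (Algebra.linearMap B K).restrictScalars ℤ
  let f' : B' →ₗ[ℤ] L := (Algebra.linearMap B' L).restrictScalars ℤ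
  obtain ⟨N, Q, hN, hQ, H⟩ := field_norm K L (G.map f') (hG.map f')
  obtain ⟨b, hb, hbN⟩ := common_denom B K N hN
  obtain ⟨b', hb', hbQ⟩ := common_denom B' L Q hQ
  obtain ⟨a, ha, s, hs⟩ := (Algebra.IsAlgebraic.isAlgebraic (R := B) b').exists_nonzero_dvd
    (mem_nonZeroDivisors_of_ne_zero hb')
  have hfinj : Function.Injective f := IsFractionRing.injective B K
  have hfinj' : Function.Injective (algebraMap B' L) := IsFractionRing.injective B' L
  let P := N.map (LinearMap.mulLeft ℤ (algebraMap B K (a * b)))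
  have hP : P.FG := hN.map _
  refine ⟨P.comap f, ?_, ?_⟩
  · refine Submodule.fg_of_fg_map_injective f hfinj ?_
    have : IsNoetherian ℤ P := isNoetherian_of_fg_of_noetherian P hP
    exact Submodule.FG.of_le hP (Submodule.map_comap_le _ _)
  · intro g hg hg0
    obtain ⟨n, hn, hn0, q, hq, hnq⟩ := H (algebraMap B' L g) ⟨g, hg, rfl⟩
      (fun h => hg0 (hfinj' (by simpa using h)))
    obtain ⟨x, hx⟩ := hbN n hn
    obtain ⟨y, hy⟩ := hbQ q hq
    have hx' : algebraMap B K (a * x) = algebraMap B K (a * b) * n := by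
      rw [map_mul, hx, map_mul, mul_assoc]
    refine ⟨a * x, ⟨n, hn, hx'.symm⟩, ?_, algebraMap B B' b * s * y, ?_⟩
    · refine mul_ne_zero ha fun h => ?_
      rw [h, map_zero] at hx
      have := (mul_eq_zero.1 hx.symm).resolve_right hn0
      exact hb (hfinj (this.trans (map_zero f).symm))
    · apply hfinj'
      have e1 : algebraMap B' L (algebraMap B B' (a * x)) = algebraMap K L (algebraMap B K (a * x)) := by
        rw [← IsScalarTower.algebraMap_apply, ← IsScalarTower.algebraMap_apply]
      have e2 : ∀ z : B, algebraMap K L (algebraMap B K z) = algebraMap B' L (algebraMap B B' z) := by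
        intro z
        rw [← IsScalarTower.algebraMap_apply, ← IsScalarTower.algebraMap_apply]
      rw [e1, hx', map_mul, hnq, e2, map_mul, map_mul, hs, map_mul, map_mul, map_mul, map_mul,
        hy]
      ring

lemma exists_pow_integral (B B' : Type*) [CommRing B] [IsDomain B] [CommRing B'] [IsDomain B']
    [Algebra B B'] [Algebra.FiniteType B B'] [Algebra.IsAlgebraic B B'] :
    ∃ r : B, r ≠ 0 ∧ ∀ x : B', ∃ n : ℕ, IsIntegral B (algebraMap B B' r ^ n * x) := by
  obtain ⟨s, hs⟩ := Algebra.FiniteType.out (R := B) (A := B')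
  obtain ⟨r, hr, H⟩ := Algebra.IsAlgebraic.exists_integral_multiples B s
  refine ⟨r, hr, fun x => ?_⟩
  have hx : x ∈ Algebra.adjoin B (s : Set B') := hs ▸ Algebra.mem_top
  have hri : ∀ n, IsIntegral B (algebraMap B B' r ^ n) := fun n => isIntegral_algebraMap.pow n
  induction hx using Algebra.adjoin_induction with
  | mem x hx => exact ⟨1, by simpa [Algebra.smul_def] using H x hx⟩
  | algebraMap b => exact ⟨0, by simpa using isIntegral_algebraMap⟩
  | add x y _ _ hx hy =>
    obtain ⟨n, hn⟩ := hx
    obtain ⟨m, hm⟩ := hy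
    refine ⟨n + m, ?_⟩
    convert ((hri m).mul hn).add ((hri n).mul hm) using 1
    ring
  | mul x y _ _ hx hy =>
    obtain ⟨n, hn⟩ := hx
    obtain ⟨m, hm⟩ := hy
    refine ⟨n + m, ?_⟩
    convert hn.mul hm using 1
    ring

lemma exists_extension (k : Type*) [Field k] [IsAlgClosed k]
    (B : Type*) [CommRing B] [IsDomain B] [Algebra k B] [Algebra.FiniteType k B]
    (B' : Type*) [CommRing B'] [IsDomain B'] [Algebra k B'] [Algebra B B']
    [IsScalarTower k B B'] (hinj : Function.Injective (algebraMap B B'))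
    [Algebra.FiniteType B B'] [Algebra.IsAlgebraic B B'] :
    ∃ r : B, r ≠ 0 ∧ ∀ c : B →ₐ[k] k, c r ≠ 0 →
      ∃ c' : B' →ₐ[k] k, c'.comp (IsScalarTower.toAlgHom k B B') = c := by
  obtain ⟨r, hr, H⟩ := exists_pow_integral B B'
  refine ⟨r, hr, fun c hc => ?_⟩
  let P : Ideal B := RingHom.ker c
  have : P.IsPrime := RingHom.ker_isPrime _
  let C := integralClosure B B'
  have hBC : Function.Injective (algebraMap B C) := by
    intro x y h
    exact hinj (congrArg Subtype.val h)
  obtain ⟨Q, hQ, hQP⟩ := Ideal.exists_ideal_over_prime_of_isIntegral_of_isDomain (S := C) P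
    (by rw [(RingHom.injective_iff_ker_eq_bot _).1 hBC]; exact bot_le)
  have hI : P.map (algebraMap B B') ≠ ⊤ := by
    intro htop
    have main : ∀ y ∈ P.map (algebraMap B B'), ∃ n : ℕ, ∃ q ∈ Q,
        algebraMap B B' r ^ n * y = (q : B') := by
      intro y hy
      induction hy using Submodule.span_induction with
      | mem x hx =>
        obtain ⟨p, hp, rfl⟩ := hx
        refine ⟨0, algebraMap B C p, ?_, by rw [pow_zero, one_mul]; rfl⟩
        rw [← Ideal.mem_comap, hQP]
        exact hp
      | zero => exact ⟨0, 0, Q.zero_mem, by simp⟩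
      | add x y _ _ hx hy =>
        obtain ⟨n, q, hq, hn⟩ := hx
        obtain ⟨m, q', hq', hm⟩ := hy
        refine ⟨n + m, algebraMap B C r ^ m * q + algebraMap B C r ^ n * q',
          Q.add_mem (Q.mul_mem_left _ hq) (Q.mul_mem_left _ hq'), ?_⟩
        push_cast
        rw [← hn, ← hm]
        ring
      | smul a x _ hx =>
        obtain ⟨n, q, hq, hn⟩ := hx
        obtain ⟨m, hm⟩ := H a
        refine ⟨m + n, (⟨_, hm⟩ : C) * q, Q.mul_mem_left _ hq, ?_⟩
        push_cast
        rw [← hn, smul_eq_mul]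
        ring
    obtain ⟨n, q, hq, hn⟩ := main 1 (htop ▸ Submodule.mem_top)
    have : algebraMap B C (r ^ n) ∈ Q := by
      have : algebraMap B C (r ^ n) = q := by
        apply Subtype.ext
        rw [← hn, mul_one, ← map_pow]
        rfl
      rwa [this]
    rw [← Ideal.mem_comap, hQP] at this
    exact hc (Ideal.IsPrime.mem_of_pow_mem ‹_› n this)
  obtain ⟨m, hm, hIm⟩ := Ideal.exists_le_maximal _ hI
  let : Field (B' ⧸ m) := Ideal.Quotient.field m
  have : Algebra.FiniteType k B' := Algebra.FiniteType.trans ‹_› (‹_› : Algebra.FiniteType B B')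
  have : Algebra.FiniteType k (B' ⧸ m) := inferInstance
  have : Module.Finite k (B' ⧸ m) := finite_of_finite_type_of_isJacobsonRing k (B' ⧸ m)
  have hbij := IsAlgClosed.algebraMap_bijective_of_isIntegral (k := k) (K := B' ⧸ m)
  let E : k ≃ₐ[k] B' ⧸ m := AlgEquiv.ofBijective (Algebra.ofId k _) hbij
  refine ⟨E.symm.toAlgHom.comp (Ideal.Quotient.mkₐ k m), ?_⟩
  ext x
  have hx : x - algebraMap k B (c x) ∈ P := by
    change c _ = 0
    simp
  have h2 : Ideal.Quotient.mkₐ k m (algebraMap B B' (x - algebraMap k B (c x))) = 0 :=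
    Ideal.Quotient.eq_zero_iff_mem.2 (hIm (Ideal.mem_map_of_mem _ hx))
  rw [map_sub, map_sub, sub_eq_zero, ← IsScalarTower.algebraMap_apply, AlgHom.commutes] at h2
  change E.symm (Ideal.Quotient.mkₐ k m (algebraMap B B' x)) = c x
  rw [h2, AlgEquiv.commutes]
  rfl

lemma injOn_of {R S F : Type*} [AddGroup R] [AddGroup S] [FunLike F R S] [AddMonoidHomClass F R S]
    (f : F) (G : AddSubgroup R) (h : ∀ g ∈ G, f g = 0 → g = 0) : Set.InjOn f (G : Set R) := by
  intro x hx y hy hxy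
  exact sub_eq_zero.1 (h _ (G.sub_mem hx hy) (by rw [map_sub, hxy, sub_self]))

end AdOpenAux

/-- **Lifting of ad-open sets along algebraic extensions.**
Let `k` be an algebraically closed field of characteristic zero and let `B ⊆ B'` be integral
domains such that `B` is a finitely generated `k`-algebra and `B'` is a finitely generated
`B`-algebra that is algebraic over `B` (i.e. every element of `B'` is algebraic over `B`,
equivalently `Frac(B')/Frac(B)` is an algebraic field extension).  Let
`φ : Hom_{k-alg}(B',k) → Hom_{k-alg}(B,k)` be the restriction map.  Then for every finitely
generated subgroup `Γ'` of `(B',+)` there exists a finitely generated subgroup `Γ` of `(B,+)`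
such that, with `U = {c : c injective on Γ}` and `U' = {c' : c' injective on Γ'}`, one has
`U ⊆ φ(U')` and `φ⁻¹(U) ⊆ U'`. -/
theorem adOpen_lift_along_algebraic_extension
    (k : Type*) [Field k] [IsAlgClosed k] [CharZero k]
    (B : Type*) [CommRing B] [IsDomain B] [Algebra k B] [Algebra.FiniteType k B]
    (B' : Type*) [CommRing B'] [IsDomain B'] [Algebra k B'] [Algebra B B']
    [IsScalarTower k B B']
    (hinj : Function.Injective (algebraMap B B'))
    [Algebra.FiniteType B B'] [Algebra.IsAlgebraic B B']
    (Γ' : AddSubgroup B') (hΓ' : Γ'.FG) :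
    ∃ Γ : AddSubgroup B, Γ.FG ∧
      (∀ c : B →ₐ[k] k, Set.InjOn c (Γ : Set B) →
        ∃ c' : B' →ₐ[k] k, Set.InjOn c' (Γ' : Set B') ∧
          c'.comp (IsScalarTower.toAlgHom k B B') = c) ∧
      (∀ c' : B' →ₐ[k] k,
        Set.InjOn (c'.comp (IsScalarTower.toAlgHom k B B')) (Γ : Set B) →
        Set.InjOn c' (Γ' : Set B')) := by
  obtain ⟨N, hN, H⟩ := AdOpenAux.norm_domain B B' hinj (AddSubgroup.toIntSubmodule Γ')
    (by rwa [Submodule.fg_iff_addSubgroup_fg])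
  obtain ⟨r, hr, hext⟩ := AdOpenAux.exists_extension k B B' hinj
  let M : Submodule ℤ B := N ⊔ Submodule.span ℤ {r}
  have hM : M.FG := hN.sup (Submodule.fg_span (by simp))
  have part2 : ∀ c' : B' →ₐ[k] k,
        Set.InjOn (c'.comp (IsScalarTower.toAlgHom k B B')) (M.toAddSubgroup : Set B) →
        Set.InjOn c' (Γ' : Set B') := by
    intro c' hc'
    refine AdOpenAux.injOn_of c' Γ' fun g hg h0 => ?_
    by_contra hg0
    obtain ⟨n, hn, hn0, y, hy⟩ := H g hg hg0
    refine hn0 (hc' (Submodule.mem_sup_left hn) M.zero_mem ?_)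
    change c' (algebraMap B B' n) = c' (algebraMap B B' 0)
    rw [hy, map_mul, h0, zero_mul, map_zero, map_zero]
  refine ⟨M.toAddSubgroup, (Submodule.fg_iff_addSubgroup_fg _).1 hM, ?_, part2⟩
  intro c hc
  have hcr : c r ≠ 0 := fun h => hr (hc (Submodule.mem_sup_right
    (Submodule.mem_span_singleton_self r)) M.zero_mem (by rw [h, map_zero]))
  obtain ⟨c', hc'⟩ := hext c hcr
  exact ⟨c', part2 c' (by rwa [hc']), hc'⟩
end

section
/- Let k₀ be a field of characteristic zero, B₀ a finitely generated k₀-algebra that is an integral domain, and B₀' an integral domain containing B₀ such that B₀' is algebraic over B₀ and a finitely generated B₀-algebra. Then there exists a nonzero b ∈ B₀ such that for every prime ideal 𝔭 of B₀ with b ∉ 𝔭: (i) there exists a prime ideal of B₀' lying over 𝔭; (ii) the fibre B₀' ⊗_{B₀} κ(𝔭) is a κ(𝔭)-vector space of dimension [Frac(B₀') : Frac(B₀)]; and (iii) every prime ideal 𝔭' of B₀' lying over 𝔭 satisfies [κ(𝔭') : κ(𝔭)] ≤ [Frac(B₀') : Frac(B₀)]. -/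
noncomputable section

/-- A ring map `f : R →+* S` is *algebraic* if every element of `S` satisfies a nonzero
(not necessarily monic) univariate polynomial over `R`; for an inclusion of integral domains
this is equivalent to `Frac(S)/Frac(R)` being an algebraic field extension. -/
def RingHom.IsAlgebraicOver {R S : Type*} [CommRing R] [CommRing S] (f : R →+* S) : Prop :=
  ∀ s : S, ∃ P : Polynomial R, P ≠ 0 ∧ Polynomial.eval₂ f s P = 0

/-- The residue field `κ(p)` at a prime ideal `p`, realized as the fraction field of `R ⧸ p`. -/
abbrev resField (R : Type*) [CommRing R] (p : Ideal R) : Type _ :=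
  FractionRing (R ⧸ p)

/-- The canonical map `R → κ(p)`. -/
def resCanon (R : Type*) [CommRing R] (p : Ideal R) : R →+* resField R p :=
  (algebraMap (R ⧸ p) (resField R p)).comp (Ideal.Quotient.mk p)

/-- The map on residue fields `κ(p) → κ(q)` induced by `f : R →+* S` when the prime `q` of `S`
lies over the prime `p` of `R`. -/
def resFieldMap {R S : Type*} [CommRing R] [CommRing S] (f : R →+* S)
    (p : Ideal R) (q : Ideal S) [p.IsPrime] [q.IsPrime] (h : q.comap f = p) :
    resField R p →+* resField S q :=
  IsFractionRing.lift
    (g := (algebraMap (S ⧸ q) (resField S q)).comp (Ideal.quotientMap q f h.ge))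
    ((IsFractionRing.injective (S ⧸ q) (resField S q)).comp
      (Ideal.quotientMap_injective' (H := h.ge) h.le))

/-- The residue degree `[κ(q) : κ(p)]` (as a cardinal), for `q` a prime of `S` lying over
the prime `p` of `R`; junk value `0` if `q` does not lie over `p`. -/
def resRank {R S : Type*} [CommRing R] [CommRing S] (f : R →+* S)
    (p : PrimeSpectrum R) (q : PrimeSpectrum S) : Cardinal :=
  letI := Classical.dec (q.asIdeal.comap f = p.asIdeal)
  if h : q.asIdeal.comap f = p.asIdeal then
    letI := (resFieldMap f p.asIdeal q.asIdeal h).toAlgebra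
    Module.rank (resField R p.asIdeal) (resField S q.asIdeal)
  else 0

/-- The degree `[Frac(S) : Frac(R)]` (as a cardinal) of the extension of fraction fields
induced by an injective map `f : R →+* S` of integral domains; junk value `0` if `f` is not
injective. -/
def fracRank {R S : Type*} [CommRing R] [IsDomain R] [CommRing S] [IsDomain S]
    (f : R →+* S) : Cardinal :=
  letI := Classical.dec (Function.Injective f)
  if hf : Function.Injective f then
    letI := (IsFractionRing.lift (g := (algebraMap S (FractionRing S)).comp f)
      ((IsFractionRing.injective S (FractionRing S)).comp hf) :
        FractionRing R →+* FractionRing S).toAlgebra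
    Module.rank (FractionRing R) (FractionRing S)
  else 0

/-- The basic Hilbert set `H(S/R)`: the set of primes `p` of `R` such that there is exactly
one prime `q` of `S` lying over `p`, and this `q` satisfies `[κ(q) : κ(p)] = [Frac(S) : Frac(R)]`. -/
def basicHilbertSet {R S : Type*} [CommRing R] [IsDomain R] [CommRing S] [IsDomain S]
    (f : R →+* S) : Set (PrimeSpectrum R) :=
  {p | (∃! q : PrimeSpectrum S, q.asIdeal.comap f = p.asIdeal) ∧
    ∀ q : PrimeSpectrum S, q.asIdeal.comap f = p.asIdeal → resRank f p q = fracRank f}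

/-- The data of an integral domain extension `R ⊆ S` which is of finite type and algebraic
over `R` (so that `Frac(S)/Frac(R)` is a finite extension). -/
structure AlgExt (R : Type u) [CommRing R] : Type (u + 1) where
  /-- the extension ring -/
  carrier : Type u
  [commRing : CommRing carrier]
  [isDomain : IsDomain carrier]
  /-- the inclusion map -/
  hom : R →+* carrier
  inj : Function.Injective hom
  ft : hom.FiniteType
  alg : hom.IsAlgebraicOver

attribute [instance] AlgExt.commRing AlgExt.isDomain

/-- A Hilbert subset of `Spec R`: a finite intersection of basic Hilbert sets `H(Bᵢ/R)`
with a basic Zariski open set `D(b)`, `b ≠ 0`. -/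
def IsHilbertSet {R : Type u} [CommRing R] [IsDomain R] (H : Set (PrimeSpectrum R)) : Prop :=
  ∃ (r : ℕ) (E : Fin r → AlgExt R) (b : R), b ≠ 0 ∧
    H = (⋂ i, basicHilbertSet (E i).hom) ∩ {p | b ∉ p.asIdeal}

/-- The set of primes `p` of `R` at which the reduction of the polynomial `g` modulo `p` is
irreducible in `κ(p)[y]`. -/
def irreduciblePolySet {R : Type*} [CommRing R] (g : Polynomial R) :
    Set (PrimeSpectrum R) :=
  {p | Irreducible (g.map (resCanon R p.asIdeal))}

end

noncomputable section

/-- The dimension (as a cardinal) of the fibre `S ⊗_R κ(p)` as a `κ(p)`-vector space. -/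
def fibreRank {R S : Type*} [CommRing R] [CommRing S] (f : R →+* S)
    (p : PrimeSpectrum R) : Cardinal :=
  letI : Algebra R S := f.toAlgebra
  letI : Algebra R (resField R p.asIdeal) := (resCanon R p.asIdeal).toAlgebra
  Module.rank (resField R p.asIdeal) (TensorProduct R (resField R p.asIdeal) S)

section GenericHelpers

open TensorProduct

/-- A subalgebra, algebraic over the base field, that contains a domain generating `L` as a
field of fractions is everything. -/
theorem aux_subalgebra_eq_top {F S L : Type*} [Field F] [Field L] [Algebra F L]
    [CommRing S] [Algebra S L]
    (hS : ∀ z : L, ∃ a c : S, z = algebraMap S L a / algebraMap S L c)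
    (A : Subalgebra F L) (hA : ∀ s : S, algebraMap S L s ∈ A)
    (halg : ∀ x ∈ A, IsAlgebraic F x) : A = ⊤ := by
  rw [eq_top_iff]
  rintro z -
  obtain ⟨a, c, rfl⟩ := hS z
  rw [div_eq_mul_inv]
  refine A.mul_mem (hA a) ?_
  refine A.inv_mem_of_algebraic (x := ⟨_, hA c⟩) (halg _ (hA c))

theorem aux_tensor_surj {R F S L : Type*} [CommRing R] [Field F] [Field L] [Algebra F L]
    [CommRing S] [Algebra S L] [Algebra R S] [Algebra R F] [Algebra R L]
    [IsScalarTower R S L] [IsScalarTower R F L]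
    (hS : ∀ z : L, ∃ a c : S, z = algebraMap S L a / algebraMap S L c)
    (halg : Algebra.IsAlgebraic F L ∨ Algebra.IsAlgebraic F (F ⊗[R] S)) :
    Function.Surjective (Algebra.TensorProduct.lift (Algebra.ofId F L)
      (IsScalarTower.toAlgHom R S L) (fun _ _ => Commute.all _ _)) := by
  rw [← AlgHom.range_eq_top]
  refine aux_subalgebra_eq_top hS _ (fun s => ⟨1 ⊗ₜ s, by simp⟩) ?_
  rcases halg with h | h
  · exact fun x _ => h.isAlgebraic x
  · rintro _ ⟨y, rfl⟩
    exact (h.isAlgebraic y).algHom _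

theorem aux_span_top {R K S L : Type*} [CommRing R] [Field K] [Field L] [Algebra K L]
    [CommRing S] [Algebra S L] [Algebra R S] [Algebra R K] [Algebra R L]
    [IsScalarTower R S L] [IsScalarTower R K L]
    (hS : ∀ z : L, ∃ a c : S, z = algebraMap S L a / algebraMap S L c)
    [Algebra.IsAlgebraic K L] :
    Submodule.span K (Set.range (algebraMap S L)) = ⊤ := by
  rw [eq_top_iff]
  rintro z -
  obtain ⟨y, rfl⟩ := aux_tensor_surj (R := R) (F := K) hS (Or.inl inferInstance) z
  induction y with
  | zero => simp
  | add x y hx hy => rw [map_add]; exact Submodule.add_mem _ hx hy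
  | tmul k s =>
    simp only [Algebra.TensorProduct.lift_tmul, Algebra.ofId_apply]
    rw [← Algebra.smul_def]
    exact Submodule.smul_mem _ _ (Submodule.subset_span ⟨s, rfl⟩)

/-- The main commutative algebra input. -/
theorem aux_main {R S : Type u} [CommRing R] [IsDomain R] [CommRing S] [IsDomain S]
    [Algebra R S] [Algebra.FiniteType R S] [Algebra.IsAlgebraic R S]
    (K L : Type u) [Field K] [Field L] [Algebra R K] [IsFractionRing R K]
    [Algebra S L] [IsFractionRing S L] [Algebra K L] [Algebra R L]
    [IsScalarTower R S L] [IsScalarTower R K L] :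
    ∃ (ι : Type u) (_ : Finite ι) (_ : Nonempty ι) (e : ι → S) (b : R), b ≠ 0 ∧
      Module.rank K L = Cardinal.mk ι ∧ LinearIndependent R e ∧
      ∀ x : S, ∃ n : ℕ, b ^ n • x ∈ Submodule.span R (Set.range e) := by
  classical
  have hRL : Function.Injective (algebraMap R L) := by
    rw [IsScalarTower.algebraMap_eq R K L]
    exact (algebraMap K L).injective.comp (IsFractionRing.injective R K)
  have : FaithfulSMul R L := (faithfulSMul_iff_algebraMap_injective R L).2 hRL
  have : Algebra.IsAlgebraic R L := (IsFractionRing.isAlgebraic_iff' R S L).1 inferInstance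
  have : Algebra.IsAlgebraic K L := (IsFractionRing.comap_isAlgebraic_iff (A := R)).1 inferInstance
  have : Algebra.EssFiniteType S L := Algebra.EssFiniteType.of_isLocalization L (nonZeroDivisors S)
  have : Algebra.EssFiniteType R L := Algebra.EssFiniteType.comp R S L
  have : Algebra.EssFiniteType K L := Algebra.EssFiniteType.of_comp R K L
  have : Module.Finite K L := Algebra.finite_of_essFiniteType_of_isAlgebraic
  have hS : ∀ z : L, ∃ a c : S, z = algebraMap S L a / algebraMap S L c := fun z => by
    obtain ⟨a, c, -, h⟩ := IsFractionRing.div_surjective (A := S) z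
    exact ⟨a, c, h.symm⟩
  obtain ⟨t, hts, hspan, hli⟩ := exists_linearIndependent K (Set.range (algebraMap S L))
  rw [aux_span_top (R := R) hS] at hspan
  let B : Module.Basis t K L := Module.Basis.mk hli (by simp [hspan])
  have : Finite t := Module.Finite.finite_basis B
  cases nonempty_fintype t
  have hmem : ∀ i : t, ∃ s : S, algebraMap S L s = i := fun i => hts i.2
  choose e he using hmem
  have hB : ∀ i, B i = algebraMap S L (e i) := fun i => by simp [B, he]
  have hne : Nonempty t := B.index_nonempty
  have heR : LinearIndependent R e := by
    have h1 : LinearIndependent R (fun i => B i) := B.linearIndependent.restrict_scalars' R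
    refine LinearIndependent.of_comp (IsScalarTower.toAlgHom R S L).toLinearMap ?_
    convert! h1 using 1
    ext i
    simp [hB]
  -- each element has a nonzero multiple in the span
  have hden : ∀ x : S, ∃ r : R, r ≠ 0 ∧ r • x ∈ Submodule.span R (Set.range e) := by
    intro x
    obtain ⟨r, hr⟩ := IsLocalization.exist_integer_multiples_of_finite (nonZeroDivisors R)
      (fun i => B.repr (algebraMap S L x) i)
    choose c hc using hr
    refine ⟨r, nonZeroDivisors.ne_zero r.2, ?_⟩
    have : (r : R) • x = ∑ i, c i • e i := by
      apply IsFractionRing.injective S L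
      have h2 : algebraMap S L ((r : R) • x) = (r : R) • algebraMap S L x :=
        (IsScalarTower.toAlgHom R S L).toLinearMap.map_smul _ _
      have h3 : ∀ i, algebraMap S L (c i • e i) = c i • algebraMap S L (e i) := fun i =>
        (IsScalarTower.toAlgHom R S L).toLinearMap.map_smul _ _
      rw [h2, map_sum]
      conv_lhs => rw [← B.sum_repr (algebraMap S L x)]
      rw [Finset.smul_sum]
      refine Finset.sum_congr rfl fun i _ => ?_
      rw [h3, hB, ← smul_assoc, ← hc i, algebraMap_smul]
    rw [this]
    exact Submodule.sum_mem _ fun i _ => Submodule.smul_mem _ _ (Submodule.subset_span ⟨i, rfl⟩)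
  choose d hd0 hd using hden
  obtain ⟨G, hG⟩ := (inferInstance : Algebra.FiniteType R S).out
  let b : R := d 1 * ∏ g ∈ G, ∏ i, d (e i * g)
  refine ⟨t, inferInstance, hne, e, b, ?_, ?_, heR, ?_⟩
  · exact mul_ne_zero (hd0 _) (Finset.prod_ne_zero_iff.2 fun g _ =>
      Finset.prod_ne_zero_iff.2 fun i _ => hd0 _)
  · exact B.mk_eq_rank''.symm
  set M := Submodule.span R (Set.range e) with hM
  have hdvd : ∀ x : S, d x ∣ b → b • x ∈ M := by
    rintro x ⟨c, hc⟩
    rw [hc, mul_comm, mul_smul]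
    exact M.smul_mem _ (hd x)
  have h1 : b • (1 : S) ∈ M := hdvd _ (Dvd.intro _ rfl)
  have hg : ∀ g ∈ G, ∀ m ∈ M, b • (m * g) ∈ M := by
    intro g hg m hm
    induction hm using Submodule.span_induction with
    | mem x hx =>
      obtain ⟨i, rfl⟩ := hx
      refine hdvd _ (Dvd.dvd.mul_left ?_ _)
      exact (Finset.dvd_prod_of_mem (fun i => d (e i * g)) (Finset.mem_univ i)).trans
        (Finset.dvd_prod_of_mem (fun g => ∏ i, d (e i * g)) hg)
    | zero => simp
    | add x y _ _ hx hy => rw [add_mul, smul_add]; exact M.add_mem hx hy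
    | smul a x _ hx => rw [smul_mul_assoc, smul_comm]; exact M.smul_mem _ hx
  have key : ∀ x : S, ∀ m ∈ M, ∃ n : ℕ, b ^ n • (m * x) ∈ M := by
    intro x
    have hx : x ∈ Algebra.adjoin R (G : Set S) := by rw [hG]; trivial
    induction hx using Algebra.adjoin_induction with
    | mem x hx => exact fun m hm => ⟨1, by simpa using hg x hx m hm⟩
    | algebraMap r =>
      refine fun m hm => ⟨0, ?_⟩
      rw [pow_zero, one_smul, mul_comm, ← Algebra.smul_def]
      exact M.smul_mem _ hm
    | add x y _ _ hx hy =>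
      intro m hm
      obtain ⟨n, hn⟩ := hx m hm
      obtain ⟨k, hk⟩ := hy m hm
      refine ⟨n + k, ?_⟩
      rw [mul_add, smul_add]
      refine M.add_mem ?_ ?_
      · rw [pow_add, mul_comm, mul_smul]; exact M.smul_mem _ hn
      · rw [pow_add, mul_smul]; exact M.smul_mem _ hk
    | mul x y _ _ hx hy =>
      intro m hm
      obtain ⟨n, hn⟩ := hx m hm
      obtain ⟨k, hk⟩ := hy _ hn
      refine ⟨k + n, ?_⟩
      rw [pow_add, mul_smul, ← mul_assoc, ← smul_mul_assoc]
      exact hk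
  intro x
  obtain ⟨n, hn⟩ := key x _ h1
  refine ⟨n + 1, ?_⟩
  rwa [smul_mul_assoc, one_mul, ← mul_smul, ← pow_succ] at hn

theorem aux_rank {R S : Type u} [CommRing R] [CommRing S] [Algebra R S]
    {ι : Type u} (e : ι → S) (b : R) (he : LinearIndependent R e)
    (hb : ∀ x : S, ∃ n : ℕ, b ^ n • x ∈ Submodule.span R (Set.range e))
    (F : Type u) [Field F] [Algebra R F] (hF : algebraMap R F b ≠ 0) :
    Module.rank F (F ⊗[R] S) = Cardinal.mk ι := by
  let Rb := Localization.Away b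
  let φ : Rb →+* F := IsLocalization.Away.lift b (g := algebraMap R F) hF.isUnit
  let : Algebra Rb F := φ.toAlgebra
  have : IsScalarTower R Rb F := IsScalarTower.of_algebraMap_eq' (by
    ext x; exact (IsLocalization.Away.lift_eq b hF.isUnit x).symm)
  have : Nontrivial Rb := φ.domain_nontrivial
  have hli : LinearIndependent Rb ((TensorProduct.mk R Rb S 1) ∘ e) :=
    he.of_isLocalizedModule (S := Submonoid.powers b) Rb _
  have hmem : ∀ s : S, (1 : Rb) ⊗ₜ[R] s ∈
      Submodule.span Rb (Set.range ((TensorProduct.mk R Rb S 1) ∘ e)) := by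
    intro s
    obtain ⟨n, hn⟩ := hb s
    have hu : IsUnit (algebraMap R Rb b ^ n) := (IsLocalization.Away.algebraMap_isUnit b).pow n
    have h1 : ∀ m ∈ Submodule.span R (Set.range e), (1 : Rb) ⊗ₜ[R] m ∈
      Submodule.span Rb (Set.range ((TensorProduct.mk R Rb S 1) ∘ e)) := by
      intro m hm
      induction hm using Submodule.span_induction with
      | mem x hx => obtain ⟨i, rfl⟩ := hx; exact Submodule.subset_span ⟨i, rfl⟩
      | zero => simp
      | add x y _ _ hx hy => rw [TensorProduct.tmul_add]; exact Submodule.add_mem _ hx hy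
      | smul a x _ hx =>
        rw [TensorProduct.tmul_smul, ← algebraMap_smul Rb]
        exact Submodule.smul_mem _ _ hx
    have h2 := h1 _ hn
    rw [TensorProduct.tmul_smul, ← algebraMap_smul Rb, map_pow] at h2
    exact (Submodule.smul_mem_iff_of_isUnit _ hu).1 h2
  have hsp : ⊤ ≤ Submodule.span Rb (Set.range ((TensorProduct.mk R Rb S 1) ∘ e)) := by
    rintro z -
    induction z with
    | zero => simp
    | add x y hx hy => exact Submodule.add_mem _ hx hy
    | tmul r s =>
      have : r ⊗ₜ[R] s = r • ((1 : Rb) ⊗ₜ[R] s) := by simp [TensorProduct.smul_tmul']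
      rw [this]
      exact Submodule.smul_mem _ _ (hmem s)
  let B := Module.Basis.mk hli hsp
  have h1 := (B.baseChange F).mk_eq_rank''
  rw [h1]
  exact (AlgebraTensorModule.cancelBaseChange R Rb F F S).symm.rank_eq

/-- Bound for residue degrees, in terms of ring homomorphisms. -/
theorem aux_residue {R S : Type u} [CommRing R] [CommRing S] [Algebra R S]
    {ι : Type u} [Finite ι] (e : ι → S) (b : R) (he : LinearIndependent R e)
    (hb : ∀ x : S, ∃ n : ℕ, b ^ n • x ∈ Submodule.span R (Set.range e))
    (F E : Type u) [Field F] [Field E] (i : R →+* F) (j : S →+* E) (g : F →+* E)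
    (hF : i b ≠ 0) (hij : ∀ x, g (i x) = j (algebraMap R S x))
    (hS : ∀ z : E, ∃ a c : S, z = j a / j c) :
    letI := g.toAlgebra
    Module.rank F E ≤ Cardinal.mk ι := by
  let : Algebra R F := i.toAlgebra
  let : Algebra S E := j.toAlgebra
  let : Algebra F E := g.toAlgebra
  let : Algebra R E := (j.comp (algebraMap R S)).toAlgebra
  have : IsScalarTower R S E := IsScalarTower.of_algebraMap_eq' rfl
  have : IsScalarTower R F E := IsScalarTower.of_algebraMap_eq' (by
    ext x
    exact (hij x).symm)
  have h1 := aux_rank e b he hb F hF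
  have : Module.Finite F (F ⊗[R] S) := by
    rw [← Module.rank_lt_aleph0_iff, h1]
    exact Cardinal.lt_aleph0_of_finite ι
  have hs := aux_tensor_surj (R := R) (F := F) (S := S) (L := E) hS (Or.inr inferInstance)
  rw [← h1]
  exact LinearMap.rank_le_of_surjective (AlgHom.toLinearMap (Algebra.TensorProduct.lift
    (Algebra.ofId F E) (IsScalarTower.toAlgHom R S E) (fun _ _ => Commute.all _ _))) hs

/-- `aux_main` in terms of ring homomorphisms. -/
theorem aux_main' {R S : Type u} [CommRing R] [IsDomain R] [CommRing S] [IsDomain S]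
    [Algebra R S] [Algebra.FiniteType R S] [Algebra.IsAlgebraic R S]
    (K L : Type u) [Field K] [Field L] [Algebra R K] [IsFractionRing R K]
    [Algebra S L] [IsFractionRing S L] (g : K →+* L)
    (hg : ∀ x, g (algebraMap R K x) = algebraMap S L (algebraMap R S x)) :
    ∃ (ι : Type u) (_ : Finite ι) (_ : Nonempty ι) (e : ι → S) (b : R), b ≠ 0 ∧
      (letI := g.toAlgebra; Module.rank K L = Cardinal.mk ι) ∧ LinearIndependent R e ∧
      ∀ x : S, ∃ n : ℕ, b ^ n • x ∈ Submodule.span R (Set.range e) := by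
  let : Algebra K L := g.toAlgebra
  let : Algebra R L := ((algebraMap S L).comp (algebraMap R S)).toAlgebra
  have : IsScalarTower R S L := IsScalarTower.of_algebraMap_eq' rfl
  have : IsScalarTower R K L := IsScalarTower.of_algebraMap_eq' (by
    ext x
    exact (hg x).symm)
  exact aux_main K L

end GenericHelpers

/-- **Generic behaviour of an algebraic extension of integral domains.**
Let `k₀` be a field of characteristic zero, `B₀` a finitely generated `k₀`-algebra that is an
integral domain, and `B₀'` an integral domain containing `B₀` such that `B₀'` is algebraic over
`B₀` and a finitely generated `B₀`-algebra.  Then there exists a nonzero `b ∈ B₀` such that for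
every prime ideal `𝔭` of `B₀` with `b ∉ 𝔭`:
(i) there exists a prime ideal of `B₀'` lying over `𝔭`;
(ii) the fibre `B₀' ⊗_{B₀} κ(𝔭)` is a `κ(𝔭)`-vector space of dimension
`[Frac(B₀') : Frac(B₀)]`; and
(iii) every prime ideal `𝔭'` of `B₀'` lying over `𝔭` satisfies
`[κ(𝔭') : κ(𝔭)] ≤ [Frac(B₀') : Frac(B₀)]`. -/
theorem generic_behaviour_of_algebraic_extension
    (k₀ : Type*) [Field k₀] [CharZero k₀]
    (B₀ : Type u) [CommRing B₀] [IsDomain B₀] [Algebra k₀ B₀] [Algebra.FiniteType k₀ B₀]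
    (B₀' : Type u) [CommRing B₀'] [IsDomain B₀']
    (f : B₀ →+* B₀') (hinj : Function.Injective f)
    (hft : f.FiniteType) (halg : f.IsAlgebraicOver) :
    ∃ b : B₀, b ≠ 0 ∧ ∀ p : PrimeSpectrum B₀, b ∉ p.asIdeal →
      (∃ q : PrimeSpectrum B₀', q.asIdeal.comap f = p.asIdeal) ∧
      fibreRank f p = fracRank f ∧
      (∀ q : PrimeSpectrum B₀', q.asIdeal.comap f = p.asIdeal →
        resRank f p q ≤ fracRank f) := by
  let : Algebra B₀ B₀' := f.toAlgebra
  have : Algebra.FiniteType B₀ B₀' := hft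
  have : Algebra.IsAlgebraic B₀ B₀' := ⟨fun s => by
    obtain ⟨P, hP, h⟩ := halg s
    exact ⟨P, hP, h⟩⟩
  have hcomp : Function.Injective ((algebraMap B₀' (FractionRing B₀')).comp f) :=
    (IsFractionRing.injective B₀' (FractionRing B₀')).comp hinj
  obtain ⟨ι, hfin, hne, e, b, hb0, hrank, hli, hb⟩ := aux_main' (R := B₀) (S := B₀')
    (FractionRing B₀) (FractionRing B₀') (IsFractionRing.lift hcomp)
    (fun x => IsFractionRing.lift_algebraMap hcomp x)
  have hfr : fracRank f = Cardinal.mk ι := by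
    rw [← hrank]
    unfold fracRank
    rw [dif_pos hinj]
  rw [hfr]
  refine ⟨b, hb0, fun p hp => ⟨?_, ?_, ?_⟩⟩
  · have hbp : algebraMap B₀ p.asIdeal.ResidueField b ≠ 0 := by
      rwa [Ne, Ideal.algebraMap_residueField_eq_zero]
    have h1 := aux_rank e b hli hb p.asIdeal.ResidueField hbp
    have : Nontrivial (TensorProduct B₀ p.asIdeal.ResidueField B₀') := by
      rw [← rank_pos_iff_nontrivial (R := p.asIdeal.ResidueField), h1]
      exact Cardinal.mk_ne_zero_iff.2 hne |>.bot_lt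
    obtain ⟨q, hq⟩ := (PrimeSpectrum.nontrivial_iff_mem_rangeComap p).1 this
    exact ⟨q, congrArg PrimeSpectrum.asIdeal hq⟩
  all_goals
    have hbp : resCanon B₀ p.asIdeal b ≠ 0 := by
      change algebraMap (B₀ ⧸ p.asIdeal) _ (Ideal.Quotient.mk _ b) ≠ 0
      rw [Ne, IsFractionRing.to_map_eq_zero_iff, Ideal.Quotient.eq_zero_iff_mem]
      exact hp
  · unfold fibreRank
    have hbp' : algebraMap B₀ (resField B₀ p.asIdeal) b ≠ 0 := by
      rw [IsScalarTower.algebraMap_apply B₀ (B₀ ⧸ p.asIdeal) (resField B₀ p.asIdeal)]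
      exact hbp
    exact aux_rank e b hli hb (resField B₀ p.asIdeal) hbp'
  · intro q hq
    unfold resRank
    rw [dif_pos hq]
    refine aux_residue e b hli hb (resField B₀ p.asIdeal) (resField B₀' q.asIdeal)
      (resCanon B₀ p.asIdeal) (resCanon B₀' q.asIdeal) (resFieldMap f p.asIdeal q.asIdeal hq)
      hbp ?_ ?_
    · intro x
      exact IsFractionRing.lift_algebraMap _ (Ideal.Quotient.mk p.asIdeal x)
    · intro z
      obtain ⟨a, c, -, h⟩ := IsFractionRing.div_surjective (A := B₀' ⧸ q.asIdeal) z
      obtain ⟨a, rfl⟩ := Ideal.Quotient.mk_surjective a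
      obtain ⟨c, rfl⟩ := Ideal.Quotient.mk_surjective c
      exact ⟨a, c, h.symm⟩

end
end

section
/- Let k₀ be a field of characteristic zero, B₀ a finitely generated k₀-algebra that is an integral domain, and B₀' an integral domain containing B₀ such that B₀' is algebraic over B₀ and a finitely generated B₀-algebra. Let π : Spec(B₀') → Spec(B₀) be the morphism corresponding to the inclusion B₀ ⊆ B₀', and let H' be a Hilbert subset of Spec(B₀'). Then there exists a Hilbert subset H of Spec(B₀) such that H ⊆ π(H') and, for every 𝔭 ∈ H, there is exactly one prime ideal of B₀' lying over 𝔭. -/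
section Helpers

/-- Degree of a homomorphism of fields, as a cardinal. -/
noncomputable def homRank {K L : Type u} [Field K] [Field L] (f : K →+* L) : Cardinal.{u} :=
  letI := f.toAlgebra
  Module.rank K L

/-- Tower law. -/
theorem homRank_comp {K L M : Type u} [Field K] [Field L] [Field M] (f : K →+* L) (g : L →+* M) :
    homRank (g.comp f) = homRank f * homRank g := by
  letI := f.toAlgebra
  letI := g.toAlgebra
  letI := (g.comp f).toAlgebra
  have : IsScalarTower K L M := IsScalarTower.of_algebraMap_eq fun _ => rfl
  exact (rank_mul_rank K L M).symm

theorem homRank_ne_zero {K L : Type u} [Field K] [Field L] (f : K →+* L) : homRank f ≠ 0 := by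
  letI := f.toAlgebra
  exact (rank_pos (R := K) (M := L)).ne'

/-- The map on fraction fields. -/
noncomputable def fracMap {R S : Type*} [CommRing R] [IsDomain R] [CommRing S] [IsDomain S]
    (f : R →+* S) (hf : Function.Injective f) : FractionRing R →+* FractionRing S :=
  IsFractionRing.lift (g := (algebraMap S (FractionRing S)).comp f)
      ((IsFractionRing.injective S (FractionRing S)).comp hf)

theorem fracMap_algebraMap {R S : Type*} [CommRing R] [IsDomain R] [CommRing S] [IsDomain S]
    (f : R →+* S) (hf : Function.Injective f) (x : R) :
    fracMap f hf (algebraMap R _ x) = algebraMap S _ (f x) := by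
  simp [fracMap]

theorem fracRank_eq {R S : Type u} [CommRing R] [IsDomain R] [CommRing S] [IsDomain S]
    (f : R →+* S) (hf : Function.Injective f) : fracRank f = homRank (fracMap f hf) := by
  unfold fracRank
  rw [dif_pos hf]
  rfl

theorem resRank_eq {R S : Type u} [CommRing R] [CommRing S] (f : R →+* S)
    (p : PrimeSpectrum R) (q : PrimeSpectrum S) (h : q.asIdeal.comap f = p.asIdeal) :
    resRank f p q = homRank (resFieldMap f p.asIdeal q.asIdeal h) := by
  unfold resRank
  rw [dif_pos h]
  rfl

theorem resFieldMap_algebraMap {R S : Type*} [CommRing R] [CommRing S] (f : R →+* S)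
    (p : Ideal R) (q : Ideal S) [p.IsPrime] [q.IsPrime] (h : q.comap f = p) (x : R) :
    resFieldMap f p q h (algebraMap _ _ (Ideal.Quotient.mk p x)) =
      algebraMap _ _ (Ideal.Quotient.mk q (f x)) := by
  simp [resFieldMap]

theorem fracRank_comp {R S T : Type u} [CommRing R] [IsDomain R] [CommRing S] [IsDomain S]
    [CommRing T] [IsDomain T] (f : R →+* S) (hf : Function.Injective f)
    (g : S →+* T) (hg : Function.Injective g) :
    fracRank (g.comp f) = fracRank f * fracRank g := by
  rw [fracRank_eq f hf, fracRank_eq g hg, fracRank_eq (g.comp f) (hg.comp hf), ← homRank_comp]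
  congr 1
  refine IsFractionRing.ringHom_ext (A := R) fun x => ?_
  simp [fracMap_algebraMap]

theorem resRank_comp {R S T : Type u} [CommRing R] [CommRing S]
    [CommRing T] (f : R →+* S) (g : S →+* T)
    (p : PrimeSpectrum R) (q : PrimeSpectrum S) (r : PrimeSpectrum T)
    (hq : q.asIdeal.comap f = p.asIdeal) (hr : r.asIdeal.comap g = q.asIdeal) :
    resRank (g.comp f) p r = resRank f p q * resRank g q r := by
  have h : r.asIdeal.comap (g.comp f) = p.asIdeal := by
    rw [← Ideal.comap_comap, hr, hq]
  rw [resRank_eq f p q hq, resRank_eq g q r hr, resRank_eq _ p r h, ← homRank_comp]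
  congr 1
  refine IsFractionRing.ringHom_ext (A := R ⧸ p.asIdeal) fun x => ?_
  obtain ⟨x, rfl⟩ := Ideal.Quotient.mk_surjective x
  simp [resFieldMap_algebraMap]

theorem isAlgebraic_of_hom {R S : Type*} [CommRing R] [CommRing S] (f : R →+* S)
    (h : f.IsAlgebraicOver) : letI := f.toAlgebra; Algebra.IsAlgebraic R S := by
  letI := f.toAlgebra
  exact ⟨fun s => h s⟩

theorem isAlgebraicOver_comp {R S T : Type*} [CommRing R] [IsDomain R] [CommRing S] [IsDomain S]
    [CommRing T] [IsDomain T] (f : R →+* S) (hf : f.IsAlgebraicOver)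
    (g : S →+* T) (hg : g.IsAlgebraicOver) : (g.comp f).IsAlgebraicOver := by
  letI := f.toAlgebra
  letI := g.toAlgebra
  letI := (g.comp f).toAlgebra
  have : IsScalarTower R S T := IsScalarTower.of_algebraMap_eq fun _ => rfl
  have : Algebra.IsAlgebraic R S := isAlgebraic_of_hom f hf
  have : Algebra.IsAlgebraic S T := isAlgebraic_of_hom g hg
  have := Algebra.IsAlgebraic.trans R S T
  exact fun s => this.isAlgebraic s

theorem fracRank_lt_aleph0 {R S : Type u} [CommRing R] [IsDomain R] [CommRing S] [IsDomain S]
    (f : R →+* S) (hf : Function.Injective f) (hft : f.FiniteType) (ha : f.IsAlgebraicOver) :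
    fracRank f < Cardinal.aleph0 := by
  rw [fracRank_eq f hf]
  letI := f.toAlgebra
  letI : Algebra (FractionRing R) (FractionRing S) := (fracMap f hf).toAlgebra
  have : Algebra.FiniteType R S := hft
  have : Algebra.IsAlgebraic R S := isAlgebraic_of_hom f ha
  have : FaithfulSMul R S := (faithfulSMul_iff_algebraMap_injective R S).2 hf
  have : IsScalarTower R (FractionRing R) (FractionRing S) :=
    IsScalarTower.of_algebraMap_eq fun x => by
      rw [IsScalarTower.algebraMap_apply R S (FractionRing S)]
      exact (fracMap_algebraMap f hf x).symm
  have : Algebra.IsAlgebraic R (FractionRing S) :=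
    (IsFractionRing.isAlgebraic_iff' R S (FractionRing S)).1 inferInstance
  have : Algebra.IsAlgebraic (FractionRing R) (FractionRing S) :=
    (IsFractionRing.comap_isAlgebraic_iff (A := R)).1 inferInstance
  have : Algebra.EssFiniteType R (FractionRing S) :=
    inferInstanceAs (Algebra.EssFiniteType R (Localization _))
  have : Algebra.EssFiniteType (FractionRing R) (FractionRing S) :=
    Algebra.EssFiniteType.of_comp R _ _
  have : FiniteDimensional (FractionRing R) (FractionRing S) :=
    Algebra.finite_of_essFiniteType_of_isAlgebraic
  exact Module.rank_lt_aleph0 (FractionRing R) (FractionRing S)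

theorem card_cancel {a c d : Cardinal.{u}} (hd0 : d ≠ 0) (hd : d < Cardinal.aleph0)
    (hc : c < Cardinal.aleph0) (h : d * a = d * c) : a = c := by
  have ha : a < Cardinal.aleph0 := by
    have h1 : d * a < Cardinal.aleph0 := h ▸ Cardinal.mul_lt_aleph0 hd hc
    rcases Cardinal.mul_lt_aleph0_iff.1 h1 with h2 | h2 | h2
    · exact absurd h2 hd0
    · rw [h2]; exact Cardinal.aleph0_pos
    · exact h2.2
  lift a to ℕ using ha
  lift c to ℕ using hc
  lift d to ℕ using hd
  norm_cast at *
  exact Nat.eq_of_mul_eq_mul_left (Nat.pos_of_ne_zero hd0) h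

/-- Key step: Hilbert sets in a tower. -/
theorem mem_basicHilbertSet_tower {R S T : Type u} [CommRing R] [IsDomain R] [CommRing S]
    [IsDomain S] [CommRing T] [IsDomain T]
    (f : R →+* S) (hf : Function.Injective f) (hft : f.FiniteType) (ha : f.IsAlgebraicOver)
    (g : S →+* T) (hg : Function.Injective g) (hgt : g.FiniteType) (hga : g.IsAlgebraicOver)
    (p : PrimeSpectrum R) (q : PrimeSpectrum S) (hq : q.asIdeal.comap f = p.asIdeal)
    (hp : p ∈ basicHilbertSet f) (hp' : p ∈ basicHilbertSet (g.comp f)) :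
    q ∈ basicHilbertSet g := by
  obtain ⟨hu, hd⟩ := hp
  obtain ⟨⟨r, hr, hru⟩, hd'⟩ := hp'
  have hrq : r.asIdeal.comap g = q.asIdeal := by
    have : PrimeSpectrum.comap g r = q := hu.unique
      (by rw [PrimeSpectrum.comap_asIdeal, Ideal.comap_comap]; exact hr) hq
    rw [← this, PrimeSpectrum.comap_asIdeal]
  have huniq : ∀ r' : PrimeSpectrum T, r'.asIdeal.comap g = q.asIdeal → r' = r := fun r' h =>
    hru r' (by show r'.asIdeal.comap (g.comp f) = _; rw [← Ideal.comap_comap, h, hq])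
  refine ⟨⟨r, hrq, huniq⟩, fun r' h => ?_⟩
  obtain rfl := huniq r' h
  have h1 := hd' r' hr
  rw [resRank_comp f g p q r' hq h, hd q hq, fracRank_comp f hf g hg] at h1
  refine card_cancel ?_ (fracRank_lt_aleph0 f hf hft ha) (fracRank_lt_aleph0 g hg hgt hga) h1
  rw [fracRank_eq f hf]
  exact homRank_ne_zero _

end Helpers

/-- **Pushing Hilbert sets down an algebraic extension.**
Let `k₀` be a field of characteristic zero, `B₀` a finitely generated `k₀`-algebra that is an
integral domain, and `B₀'` an integral domain containing `B₀` such that `B₀'` is algebraic over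
`B₀` and a finitely generated `B₀`-algebra.  Let `π : Spec(B₀') → Spec(B₀)` be the morphism
corresponding to the inclusion `B₀ ⊆ B₀'`, and let `H'` be a Hilbert subset of `Spec(B₀')`.
Then there exists a Hilbert subset `H` of `Spec(B₀)` such that `H ⊆ π(H')` and, for every
`𝔭 ∈ H`, there is exactly one prime ideal of `B₀'` lying over `𝔭`. -/
theorem hilbertSet_under_projection
    (k₀ : Type*) [Field k₀] [CharZero k₀]
    (B₀ : Type u) [CommRing B₀] [IsDomain B₀] [Algebra k₀ B₀] [Algebra.FiniteType k₀ B₀]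
    (B₀' : Type u) [CommRing B₀'] [IsDomain B₀']
    (f : B₀ →+* B₀') (hinj : Function.Injective f)
    (hft : f.FiniteType) (halg : f.IsAlgebraicOver)
    (H' : Set (PrimeSpectrum B₀')) (hH' : IsHilbertSet H') :
    ∃ H : Set (PrimeSpectrum B₀), IsHilbertSet H ∧
      H ⊆ (PrimeSpectrum.comap f) '' H' ∧
      ∀ p ∈ H, ∃! q : PrimeSpectrum B₀', q.asIdeal.comap f = p.asIdeal := by
  obtain ⟨r, E, b', hb', rfl⟩ := hH'
  obtain ⟨b, hb0, hbd⟩ : ∃ b : B₀, b ≠ 0 ∧ b' ∣ f b := by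
    letI := f.toAlgebra
    exact IsAlgebraic.exists_nonzero_dvd (R := B₀) (halg b' : IsAlgebraic B₀ b')
      (mem_nonZeroDivisors_of_ne_zero hb')
  let E₀ : AlgExt B₀ := ⟨B₀', f, hinj, hft, halg⟩
  let E₁ : Fin r → AlgExt B₀ := fun i =>
    ⟨(E i).carrier, (E i).hom.comp f, (E i).inj.comp hinj, (E i).ft.comp hft,
      isAlgebraicOver_comp f halg _ (E i).alg⟩
  refine ⟨_, ⟨r + 1, Fin.cons E₀ E₁, b, hb0, rfl⟩, ?_, ?_⟩
  · rintro p ⟨hp, hpb⟩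
    rw [Set.mem_iInter] at hp
    have h0 : p ∈ basicHilbertSet f := hp 0
    have h1 : ∀ i, p ∈ basicHilbertSet ((E i).hom.comp f) := fun i => hp i.succ
    obtain ⟨q, hq, -⟩ := h0.1
    refine ⟨q, ⟨Set.mem_iInter.2 fun i => ?_, fun hbq => hpb ?_⟩, PrimeSpectrum.ext hq⟩
    · exact mem_basicHilbertSet_tower f hinj hft halg _ (E i).inj (E i).ft (E i).alg p q hq h0 (h1 i)
    · rw [← hq]
      exact Ideal.mem_comap.2 (Ideal.mem_of_dvd q.asIdeal hbd hbq)
  · rintro p ⟨hp, -⟩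
    rw [Set.mem_iInter] at hp
    have h0 : p ∈ basicHilbertSet f := hp 0
    exact h0.1
end

section
/- Let k₀ be a field of characteristic zero, B₀ a finitely generated k₀-algebra that is an integral domain, and B₀' an integral domain containing B₀ such that B₀' is a finitely generated B₀-algebra and algebraic over B₀. Then there exist a monic polynomial f ∈ B₀[y] that is irreducible in Frac(B₀)[y] and a nonzero b ∈ B₀ such that H_{B₀}(f) ∩ D(b) ⊆ H(B₀'/B₀). -/
open Polynomial IntermediateField in
lemma aux_rank_s5 {F E : Type*} [Field F] [Field E] [Algebra F E] (x : E) (h : F⟮x⟯ = ⊤)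
    (p : F[X]) (hm : p.Monic) (hp : Irreducible p) (h0 : aeval x p = 0) :
    Module.rank F E = (p.natDegree : Cardinal) := by
  have hx : IsIntegral F x := ⟨p, hm, h0⟩
  have hmin : p = minpoly F x := minpoly.eq_of_irreducible_of_monic hp h0 hm
  have hfd : FiniteDimensional F F⟮x⟯ := adjoin.finiteDimensional hx
  have hfr := adjoin.finrank hx
  rw [h] at hfr hfd
  have : Module.rank F (⊤ : IntermediateField F E) = Module.rank F E :=
    (IntermediateField.topEquiv (F := F) (E := E)).toLinearEquiv.rank_eq
  rw [← this, ← Module.finrank_eq_rank, hfr, hmin]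

open Polynomial IntermediateField in
lemma aux_data (R S K L : Type*) [CommRing R] [IsDomain R] [CommRing S] [IsDomain S]
    [Field K] [Field L] [Algebra R S] [Algebra R K] [Algebra S L] [Algebra K L] [Algebra R L]
    [IsScalarTower R S L] [IsScalarTower R K L] [IsFractionRing R K] [IsFractionRing S L]
    [CharZero K] [Algebra.IsAlgebraic R S] [Algebra.FiniteType R S] :
    ∃ (θ : S) (g : R[X]) (b : R), g.Monic ∧ Irreducible (g.map (algebraMap R K)) ∧
      aeval θ g = 0 ∧ K⟮algebraMap S L θ⟯ = ⊤ ∧ b ≠ 0 ∧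
      ∀ s : S, ∃ (N : ℕ) (P : R[X]), algebraMap R S b ^ N * s = aeval θ P := by
  classical
  have hRK := IsFractionRing.injective R K
  have hSL := IsFractionRing.injective S L
  have hRL : Function.Injective (algebraMap R L) := by
    rw [IsScalarTower.algebraMap_eq R K L]; exact (algebraMap K L).injective.comp hRK
  obtain ⟨T, hT⟩ := (Algebra.FiniteType.out : (⊤ : Subalgebra R S).FG)
  have hint : ∀ s : S, IsIntegral K (algebraMap S L s) := fun s =>
    ((IsFractionRing.isAlgebraic_iff R K L).1
      ((Algebra.IsAlgebraic.isAlgebraic (R := R) s).algebraMap)).isIntegral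
  -- finite dimensionality
  have hfd : FiniteDimensional K L := by
    have h1 : FiniteDimensional K (adjoin K (algebraMap S L '' (T : Set S))) := by
      apply finiteDimensional_adjoin
      rintro _ ⟨s, -, rfl⟩
      exact hint s
    have h2 : adjoin K (algebraMap S L '' (T : Set S)) = ⊤ := by
      rw [eq_top_iff]
      have h3 : ∀ s : S, algebraMap S L s ∈ adjoin K (algebraMap S L '' (T : Set S)) := by
        intro s
        have hs : s ∈ Algebra.adjoin R (T : Set S) := by rw [hT]; trivial
        induction hs using Algebra.adjoin_induction with
        | mem x hx => exact subset_adjoin _ _ ⟨x, hx, rfl⟩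
        | algebraMap r =>
          rw [← IsScalarTower.algebraMap_apply R S L, IsScalarTower.algebraMap_apply R K L]
          exact IntermediateField.algebraMap_mem _ _
        | add x y _ _ hx hy => rw [map_add]; exact add_mem hx hy
        | mul x y _ _ hx hy => rw [map_mul]; exact mul_mem hx hy
      intro x _
      obtain ⟨a, c, -, rfl⟩ := IsFractionRing.div_surjective (A := S) x
      exact div_mem (h3 a) (h3 c)
    rw [h2] at h1
    exact Module.Finite.equiv (IntermediateField.topEquiv (F := K) (E := L)).toLinearEquiv
  -- primitive element
  have hscale : ∀ (x : L) (r : R), r ≠ 0 → K⟮x⟯ = ⊤ → K⟮algebraMap R L r * x⟯ = ⊤ := by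
    intro x r hr hx
    rw [eq_top_iff, ← hx, adjoin_simple_le_iff]
    have e : x = algebraMap K L (algebraMap R K r)⁻¹ * (algebraMap R L r * x) := by
      have : algebraMap R L r ≠ 0 := by simpa using (map_ne_zero_iff _ hRL).2 hr
      rw [map_inv₀, ← IsScalarTower.algebraMap_apply R K L]
      field_simp
    rw [e]
    refine mul_mem (IntermediateField.algebraMap_mem _ _) ?_
    rw [← e]
    exact mem_adjoin_simple_self _ _
  obtain ⟨α, hα⟩ := Field.exists_primitive_element K L
  obtain ⟨a, c, hc, rfl⟩ := IsFractionRing.div_surjective (A := S) α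
  obtain ⟨s₁, d, hd, hs₁⟩ := Algebra.IsAlgebraic.exists_smul_eq_mul R a (nonZeroDivisors.ne_zero hc)
  have hα1 : K⟮algebraMap S L s₁⟯ = ⊤ := by
    have := hscale _ d hd hα
    convert this using 2
    have hc' : algebraMap S L c ≠ 0 := (map_ne_zero_iff _ hSL).2 (nonZeroDivisors.ne_zero hc)
    have h := congrArg (algebraMap S L) hs₁
    rw [Algebra.smul_def, map_mul, map_mul, ← IsScalarTower.algebraMap_apply R S L] at h
    rw [Set.singleton_eq_singleton_iff]
    field_simp
    rw [h]; ring
  set m := minpoly K (algebraMap S L s₁) with hm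
  have hmm : m.Monic := minpoly.monic (hint s₁)
  set e : nonZeroDivisors R := IsLocalization.commonDenom (nonZeroDivisors R) m.support m.coeff with he
  have he0 : (e : R) ≠ 0 := nonZeroDivisors.ne_zero e.2
  obtain ⟨g, hg, hgd, hgm⟩ := lifts_and_natDegree_eq_and_monic
    (IsLocalization.scaleRoots_commonDenom_mem_lifts (nonZeroDivisors R) m
      (by rw [hmm.leadingCoeff]; exact one_mem _)) (by rwa [monic_scaleRoots_iff])
  let θ : S := algebraMap R S e * s₁
  have hθL : algebraMap S L θ = algebraMap R L e * algebraMap S L s₁ := by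
    simp only [θ, map_mul, ← IsScalarTower.algebraMap_apply R S L]
  have hθ : K⟮algebraMap S L θ⟯ = ⊤ := by rw [hθL]; exact hscale _ _ he0 hα1
  have hroot : aeval (algebraMap S L θ) (g.map (algebraMap R K)) = 0 := by
    rw [hg, hθL, IsScalarTower.algebraMap_apply R K L]
    exact scaleRoots_aeval_eq_zero (minpoly.aeval _ _)
  have hroot' : aeval θ g = 0 := by
    apply hSL
    rw [map_zero, ← hroot, aeval_map_algebraMap, aeval_algebraMap_apply]
  have hgmin : minpoly K (algebraMap S L θ) = g.map (algebraMap R K) := by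
    symm
    refine eq_of_monic_of_dvd_of_natDegree_le (minpoly.monic (hint θ)) (hgm.map _)
      (minpoly.dvd _ _ hroot) ?_
    rw [hg, natDegree_scaleRoots, (Field.primitive_element_iff_minpoly_natDegree_eq K _).1 hθ,
      (Field.primitive_element_iff_minpoly_natDegree_eq K _).1 hα1]
  have hgirr : Irreducible (g.map (algebraMap R K)) := hgmin ▸ minpoly.irreducible (hint θ)
  -- denominators
  have hden : ∀ s : S, ∃ c : R, c ≠ 0 ∧ ∃ P : R[X], algebraMap R S c * s = aeval θ P := by
    intro s
    have hs : algebraMap S L s ∈ K⟮algebraMap S L θ⟯.toSubalgebra := by rw [hθ]; trivial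
    rw [adjoin_simple_toSubalgebra_of_isAlgebraic (hint θ).isAlgebraic,
      Algebra.adjoin_singleton_eq_range_aeval] at hs
    obtain ⟨Q, hQ⟩ := hs
    obtain ⟨c, hc, h⟩ := IsLocalization.integerNormalization_spec (nonZeroDivisors R) Q
    refine ⟨c, nonZeroDivisors.ne_zero hc, IsLocalization.integerNormalization (nonZeroDivisors R) Q, ?_⟩
    apply hSL
    have hQ' : aeval (algebraMap S L θ) Q = algebraMap S L s := hQ
    rw [← aeval_algebraMap_apply, ← aeval_map_algebraMap K, h, ← algebraMap_smul K c Q, map_smul,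
      hQ', map_mul, ← IsScalarTower.algebraMap_apply R S L, Algebra.smul_def,
      ← IsScalarTower.algebraMap_apply R K L]
  choose c hc P hP using hden
  refine ⟨θ, g, ∏ t ∈ T, c t, hgm, hgirr, hroot', hθ, Finset.prod_ne_zero_iff.2 fun t _ => hc t, ?_⟩
  intro s
  set b := ∏ t ∈ T, c t with hb
  have hs : s ∈ Algebra.adjoin R (T : Set S) := by rw [hT]; trivial
  induction hs using Algebra.adjoin_induction with
  | mem x hx =>
    obtain ⟨u, hu⟩ := Finset.dvd_prod_of_mem c (Finset.mem_coe.1 hx)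
    refine ⟨1, C u * P x, ?_⟩
    rw [map_mul, ← hP, hb, hu, map_mul, aeval_C]; ring
  | algebraMap r => exact ⟨0, C r, by simp⟩
  | add x y _ _ hx hy =>
    obtain ⟨N, p, hp⟩ := hx
    obtain ⟨M, q, hq⟩ := hy
    refine ⟨N + M, C (b ^ M) * p + C (b ^ N) * q, ?_⟩
    simp only [map_add, map_mul, ← hp, ← hq, aeval_C, map_pow]; ring
  | mul x y _ _ hx hy =>
    obtain ⟨N, p, hp⟩ := hx
    obtain ⟨M, q, hq⟩ := hy
    refine ⟨N + M, p * q, ?_⟩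
    simp only [map_mul, ← hp, ← hq]; ring

open Polynomial in
lemma aux_comap {R S : Type*} [CommRing R] [CommRing S] [Algebra R S] (θ : S) (g : R[X]) (b : R)
    (hg : g.Monic) (hdeg : 0 < g.natDegree)
    (hdvd : ∀ P : R[X], aeval θ P = 0 → g ∣ P)
    (hS : ∀ s : S, ∃ (N : ℕ) (P : R[X]), algebraMap R S b ^ N * s = aeval θ P)
    (p : Ideal R) [hp : p.IsPrime] (hb : b ∉ p) :
    (p.map (algebraMap R S)).comap (algebraMap R S) = p := by
  apply le_antisymm _ Ideal.le_comap_map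
  have key : ∀ s ∈ p.map (algebraMap R S), ∃ (N : ℕ) (Q : R[X]),
      Q.map (Ideal.Quotient.mk p) = 0 ∧ algebraMap R S b ^ N * s = aeval θ Q := by
    intro s hs
    induction hs using Submodule.span_induction with
    | mem x hx =>
      obtain ⟨r, hr, rfl⟩ := hx
      refine ⟨0, C r, ?_, by simp⟩
      rw [map_C, Ideal.Quotient.eq_zero_iff_mem.2 hr, C_0]
    | zero => exact ⟨0, 0, by simp, by simp⟩
    | add x y _ _ hx hy =>
      obtain ⟨N, P, hP0, hP⟩ := hx
      obtain ⟨M, Q, hQ0, hQ⟩ := hy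
      refine ⟨N + M, C (b ^ M) * P + C (b ^ N) * Q, by simp [hP0, hQ0], ?_⟩
      simp only [map_add, map_mul, ← hP, ← hQ, aeval_C, map_pow]; ring
    | smul a x _ hx =>
      obtain ⟨N, P, hP0, hP⟩ := hx
      obtain ⟨M, Q, hQ⟩ := hS a
      refine ⟨N + M, Q * P, by simp [hP0], ?_⟩
      simp only [map_mul, ← hP, ← hQ, smul_eq_mul]; ring
  intro r hr
  obtain ⟨N, Q, hQ0, hQ⟩ := key _ hr
  have h := hdvd (C (b ^ N * r) - Q) (by rw [map_sub, ← hQ]; simp)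
  have h2 := Polynomial.map_dvd (Ideal.Quotient.mk p) h
  rw [Polynomial.map_sub, hQ0, sub_zero, map_C] at h2
  have h3 : (Ideal.Quotient.mk p) (b ^ N * r) = 0 := by
    by_contra hne
    have := Polynomial.natDegree_le_of_dvd h2 (C_ne_zero.2 hne)
    rw [natDegree_C, hg.natDegree_map] at this
    omega
  rw [Ideal.Quotient.eq_zero_iff_mem] at h3
  exact (hp.mem_or_mem h3).resolve_left fun h => hb (hp.mem_of_pow_mem _ h)

lemma aux_resCanon_eq_zero {R : Type*} [CommRing R] (p : Ideal R) [p.IsPrime] (r : R) :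
    resCanon R p r = 0 ↔ r ∈ p := by
  rw [resCanon, RingHom.comp_apply, map_eq_zero_iff _ (IsFractionRing.injective (R ⧸ p) _),
    Ideal.Quotient.eq_zero_iff_mem]

lemma aux_resFieldMap {R S : Type*} [CommRing R] [CommRing S] (f : R →+* S)
    (p : Ideal R) (q : Ideal S) [p.IsPrime] [q.IsPrime] (h : q.comap f = p) :
    (resFieldMap f p q h).comp (resCanon R p) = (resCanon S q).comp f := by
  ext r
  simp only [resCanon, resFieldMap, RingHom.comp_apply, IsFractionRing.lift_algebraMap,
    Ideal.quotientMap_mk]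

open Polynomial IntermediateField in
lemma aux_res {R S : Type*} [CommRing R] [CommRing S] (f : R →+* S)
    (θ : S) (g : R[X]) (b : R) (hg : g.Monic) (h0 : g.eval₂ f θ = 0)
    (hS : ∀ s : S, ∃ (N : ℕ) (P : R[X]), f b ^ N * s = P.eval₂ f θ)
    (p : PrimeSpectrum R) (hirr : Irreducible (g.map (resCanon R p.asIdeal)))
    (hb : b ∉ p.asIdeal)
    (q : PrimeSpectrum S) (h : q.asIdeal.comap f = p.asIdeal) :
    (∀ (s : S) (N : ℕ) (P : R[X]), f b ^ N * s = P.eval₂ f θ →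
      (s ∈ q.asIdeal ↔ g.map (resCanon R p.asIdeal) ∣ P.map (resCanon R p.asIdeal))) ∧
    resRank f p q = (g.natDegree : Cardinal) := by
  letI : Algebra (resField R p.asIdeal) (resField S q.asIdeal) :=
    (resFieldMap f p.asIdeal q.asIdeal h).toAlgebra
  have halg : algebraMap (resField R p.asIdeal) (resField S q.asIdeal) =
    resFieldMap f p.asIdeal q.asIdeal h := rfl
  set ι := resCanon S q.asIdeal with hι
  have hP : ∀ P : R[X], aeval (ι θ) (P.map (resCanon R p.asIdeal)) = ι (P.eval₂ f θ) := by
    intro P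
    rw [aeval_def, eval₂_map, halg, aux_resFieldMap, hom_eval₂]
  have hroot : aeval (ι θ) (g.map (resCanon R p.asIdeal)) = 0 := by rw [hP, h0, map_zero]
  have hmin := minpoly.eq_of_irreducible_of_monic hirr hroot (hg.map _)
  have hfb : ι (f b) ≠ 0 := by
    rw [hι, Ne, aux_resCanon_eq_zero, ← Ideal.mem_comap, h]; exact hb
  constructor
  · intro s N P hs
    rw [hmin, minpoly.dvd_iff, hP, ← hs, map_mul, map_pow, mul_eq_zero,
      or_iff_right (pow_ne_zero _ hfb), hι, aux_resCanon_eq_zero]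
  · have e : resRank f p q =
        Module.rank (resField R p.asIdeal) (resField S q.asIdeal) := by
      rw [resRank, dif_pos h]
    rw [e, ← hg.natDegree_map (resCanon R p.asIdeal)]
    refine aux_rank_s5 (ι θ) ?_ _ (hg.map _) hirr hroot
    rw [eq_top_iff]
    have h3 : ∀ s : S, ι s ∈ (resField R p.asIdeal)⟮ι θ⟯ := by
      intro s
      obtain ⟨N, P, hs⟩ := hS s
      have h1 : ι s = (ι (f b) ^ N)⁻¹ * aeval (ι θ) (P.map (resCanon R p.asIdeal)) := by
        rw [hP, ← hs, map_mul, map_pow, inv_mul_cancel_left₀ (pow_ne_zero _ hfb)]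
      have h2 : ι (f b) = algebraMap (resField R p.asIdeal) (resField S q.asIdeal)
          (resCanon R p.asIdeal b) := by
        rw [halg]
        exact (RingHom.congr_fun (aux_resFieldMap f p.asIdeal q.asIdeal h) b).symm
      rw [h1, h2]
      refine mul_mem (inv_mem (pow_mem (IntermediateField.algebraMap_mem _ _) _)) ?_
      exact (mem_adjoin_simple_iff _ _).2 ⟨P.map (resCanon R p.asIdeal), 1, by rw [map_one, div_one]⟩
    intro x _
    obtain ⟨a, c, -, rfl⟩ := IsFractionRing.div_surjective (A := S ⧸ q.asIdeal) x
    obtain ⟨a, rfl⟩ := Ideal.Quotient.mk_surjective a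
    obtain ⟨c, rfl⟩ := Ideal.Quotient.mk_surjective c
    exact div_mem (h3 a) (h3 c)


/-- **Basic Hilbert sets contain sets defined by irreducibility of a polynomial.**
Let `k₀` be a field of characteristic zero, `B₀` a finitely generated `k₀`-algebra that is an
integral domain, and `B₀'` an integral domain containing `B₀` such that `B₀'` is a finitely
generated `B₀`-algebra and algebraic over `B₀`.  Then there exist a monic polynomial
`g ∈ B₀[y]` that is irreducible in `Frac(B₀)[y]` and a nonzero `b ∈ B₀` such that
`H_{B₀}(g) ∩ D(b) ⊆ H(B₀'/B₀)`. -/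
theorem basicHilbertSet_contains_irreduciblePolySet
    (k₀ : Type*) [Field k₀] [CharZero k₀]
    (B₀ : Type u) [CommRing B₀] [IsDomain B₀] [Algebra k₀ B₀] [Algebra.FiniteType k₀ B₀]
    (B₀' : Type u) [CommRing B₀'] [IsDomain B₀']
    (f : B₀ →+* B₀') (hinj : Function.Injective f)
    (hft : f.FiniteType) (halg : f.IsAlgebraicOver) :
    ∃ (g : Polynomial B₀) (b : B₀),
      g.Monic ∧ Irreducible (g.map (algebraMap B₀ (FractionRing B₀))) ∧ b ≠ 0 ∧
      irreduciblePolySet g ∩ {p : PrimeSpectrum B₀ | b ∉ p.asIdeal} ⊆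
        basicHilbertSet f := by
  classical
  letI : Algebra B₀ B₀' := f.toAlgebra
  have hf : algebraMap B₀ B₀' = f := rfl
  letI : Algebra (FractionRing B₀) (FractionRing B₀') :=
    (IsFractionRing.lift (g := (algebraMap B₀' (FractionRing B₀')).comp f)
      ((IsFractionRing.injective B₀' (FractionRing B₀')).comp hinj) :
        FractionRing B₀ →+* FractionRing B₀').toAlgebra
  haveI : IsScalarTower B₀ (FractionRing B₀) (FractionRing B₀') := by
    refine IsScalarTower.of_algebraMap_eq fun r => ?_
    exact (IsFractionRing.lift_algebraMap (g := (algebraMap B₀' (FractionRing B₀')).comp f)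
      ((IsFractionRing.injective B₀' (FractionRing B₀')).comp hinj) r).symm
  haveI : CharZero (FractionRing B₀) :=
    charZero_of_injective_ringHom
      ((algebraMap B₀ (FractionRing B₀)).comp (algebraMap k₀ B₀)).injective
  haveI : Algebra.IsAlgebraic B₀ B₀' := ⟨fun s => halg s⟩
  haveI : Algebra.FiniteType B₀ B₀' := hft
  obtain ⟨θ, g, b, hgm, hgirr, hroot, htop, hb, hS⟩ :=
    aux_data B₀ B₀' (FractionRing B₀) (FractionRing B₀')
  have hSL := IsFractionRing.injective B₀' (FractionRing B₀')
  have hrootL : Polynomial.aeval (algebraMap B₀' (FractionRing B₀') θ)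
      (g.map (algebraMap B₀ (FractionRing B₀))) = 0 := by
    rw [Polynomial.aeval_map_algebraMap, Polynomial.aeval_algebraMap_apply, hroot, map_zero]
  have hmin := minpoly.eq_of_irreducible_of_monic hgirr hrootL (hgm.map _)
  have hfrac : fracRank f = (g.natDegree : Cardinal) := by
    have e : fracRank f = Module.rank (FractionRing B₀) (FractionRing B₀') := by
      rw [fracRank, dif_pos hinj]
    rw [e, ← hgm.natDegree_map (algebraMap B₀ (FractionRing B₀))]
    exact aux_rank_s5 _ htop _ (hgm.map _) hgirr hrootL
  have hdvd : ∀ P : Polynomial B₀, Polynomial.aeval θ P = 0 → g ∣ P := by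
    intro P hP
    rw [← Polynomial.map_dvd_map _ (IsFractionRing.injective B₀ (FractionRing B₀)) hgm, hmin]
    apply minpoly.dvd
    rw [Polynomial.aeval_map_algebraMap, Polynomial.aeval_algebraMap_apply, hP, map_zero]
  have hdeg : 0 < g.natDegree := by
    rw [← hgm.natDegree_map (algebraMap B₀ (FractionRing B₀))]
    exact hgirr.natDegree_pos
  refine ⟨g, b, hgm, hgirr, hb, ?_⟩
  rintro p ⟨hirr, hbp⟩
  have hres := aux_res f θ g b hgm hroot hS p hirr hbp
  refine ⟨?_, fun q hq => by rw [(hres q hq).2, hfrac]⟩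
  have hcm := aux_comap θ g b hgm hdeg hdvd hS p.asIdeal hbp
  obtain ⟨q, hqp, hq⟩ := (Ideal.comap_map_eq_self_iff_of_isPrime _).1 hcm
  refine ⟨⟨q, hqp⟩, hq, ?_⟩
  intro q' hq'
  ext s
  obtain ⟨N, P, hs⟩ := hS s
  exact ((hres q' hq').1 s N P hs).trans ((hres ⟨q, hqp⟩ hq).1 s N P hs).symm
end

section
/- Let k₀ be a field of characteristic zero and B₀ a finitely generated k₀-algebra that is an integral domain. For every Hilbert subset H of Spec(B₀) there exist finitely many monic polynomials f₁,…,f_m ∈ B₀[y], each irreducible in Frac(B₀)[y], and a nonzero b ∈ B₀ such that H_{B₀}(f₁,…,f_m) ∩ D(b) ⊆ H. -/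
open Polynomial nonZeroDivisors in
/-- Primitive element with all denominators cleared. -/
theorem exists_good_primitive {A S K L : Type u} [CommRing A] [IsDomain A] [CommRing S] [IsDomain S]
    [Field K] [Field L] [CharZero K] [Algebra A S] [Algebra A K] [Algebra A L] [Algebra S L]
    [Algebra K L] [IsScalarTower A S L] [IsScalarTower A K L] [IsFractionRing A K]
    [IsFractionRing S L] [FaithfulSMul A S] [Algebra.IsAlgebraic A S] [Algebra.FiniteType A S] :
    ∃ (θ : S) (f : A[X]) (c : A), f.Monic ∧ Irreducible (f.map (algebraMap A K)) ∧ c ≠ 0 ∧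
      Module.rank K L = f.natDegree ∧
      (∀ P : A[X], aeval θ P = 0 ↔ f ∣ P) ∧
      ∀ s : S, ∃ (N : ℕ) (P : A[X]), algebraMap A S c ^ N * s = aeval θ P := by
  have halg : Algebra.IsAlgebraic K L := by
    have : Algebra.IsAlgebraic A L :=
      haveI := IsFractionRing.comap_isAlgebraic_iff (A := S) (K := L) (C := L)
      haveI : Algebra.IsAlgebraic S L := this.2 inferInstance
      Algebra.IsAlgebraic.trans A S L
    exact (IsFractionRing.comap_isAlgebraic_iff (A := A) (K := K) (C := L)).1 this
  have hinjAK : Function.Injective (algebraMap A K) := IsFractionRing.injective A K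
  have hinjSL : Function.Injective (algebraMap S L) := IsFractionRing.injective S L
  have hft : Algebra.FiniteType K L := by
    have : Algebra.IsPushout A K S L := inferInstance
    exact Algebra.FiniteType.equiv (inferInstanceAs (Algebra.FiniteType K (TensorProduct A K S)))
      (Algebra.IsPushout.equiv A K S L)
  have hfin : FiniteDimensional K L := Algebra.IsIntegral.finite
  obtain ⟨α, hα⟩ := Field.exists_primitive_element K L
  -- scaling keeps primitivity
  have hscale : ∀ (β : L) (d : A), d ≠ 0 → IntermediateField.adjoin K {β} = ⊤ →
      IntermediateField.adjoin K {algebraMap A L d * β} = ⊤ := by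
    intro β d hd hβ
    rw [eq_top_iff, ← hβ, IntermediateField.adjoin_simple_le_iff]
    have hd' : algebraMap A K d ≠ 0 := by simpa using hd
    have h1 := IntermediateField.mem_adjoin_simple_self K (algebraMap A L d * β)
    have h2 := IntermediateField.smul_mem _ h1 (x := (algebraMap A K d)⁻¹)
    convert h2 using 1
    rw [IsScalarTower.algebraMap_apply A K L, ← Algebra.smul_def, inv_smul_smul₀ hd']
  obtain ⟨θ₀, hθ₀⟩ : ∃ θ₀ : S, IntermediateField.adjoin K {algebraMap S L θ₀} = ⊤ := by
    obtain ⟨⟨s, ⟨_, d, hd, rfl⟩⟩, h⟩ :=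
      IsLocalization.surj (Algebra.algebraMapSubmonoid S A⁰) α
    refine ⟨s, ?_⟩
    rw [← h]
    have := hscale α d (nonZeroDivisors.ne_zero hd) hα
    rwa [mul_comm, ← IsScalarTower.algebraMap_apply]
  have hint : IsIntegral K (algebraMap S L θ₀) := Algebra.IsIntegral.isIntegral _
  set d : A := ((IsLocalization.commonDenom A⁰ (minpoly K (algebraMap S L θ₀)).support
    (minpoly K (algebraMap S L θ₀)).coeff : A⁰) : A) with hd
  have hd0 : d ≠ 0 := nonZeroDivisors.ne_zero (Subtype.property _)
  obtain ⟨f, hf, hfdeg, hfm⟩ := lifts_and_natDegree_eq_and_monic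
    (IsLocalization.scaleRoots_commonDenom_mem_lifts A⁰ (minpoly K (algebraMap S L θ₀))
      (by rw [minpoly.monic hint]; exact ⟨1, map_one _⟩))
    ((monic_scaleRoots_iff _).2 (minpoly.monic hint))
  rw [← hd] at hf hfdeg
  rw [natDegree_scaleRoots] at hfdeg
  let θ : S := algebraMap A S d * θ₀
  have hθL : algebraMap S L θ = algebraMap A L d * algebraMap S L θ₀ := by
    simp only [θ, map_mul, ← IsScalarTower.algebraMap_apply]
  have hθ : IntermediateField.adjoin K {algebraMap S L θ} = ⊤ := by
    rw [hθL]; exact hscale _ d hd0 hθ₀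
  have hroot : aeval (algebraMap S L θ) (f.map (algebraMap A K)) = 0 := by
    rw [hf, hθL, IsScalarTower.algebraMap_apply A K L]
    exact scaleRoots_aeval_eq_zero (minpoly.aeval _ _)
  have hintθ : IsIntegral K (algebraMap S L θ) := Algebra.IsIntegral.isIntegral _
  have e1 := (Field.primitive_element_iff_minpoly_natDegree_eq K (algebraMap S L θ₀)).1 hθ₀
  have e2 := (Field.primitive_element_iff_minpoly_natDegree_eq K (algebraMap S L θ)).1 hθ
  have hmin : f.map (algebraMap A K) = minpoly K (algebraMap S L θ) := by
    refine eq_of_monic_of_dvd_of_natDegree_le (minpoly.monic hintθ) (hfm.map _)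
      (minpoly.dvd _ _ hroot) ?_
    rw [hfm.natDegree_map, hfdeg, e1, e2]
  have haev : ∀ P : A[X], algebraMap S L (aeval θ P) =
      aeval (algebraMap S L θ) (P.map (algebraMap A K)) := by
    intro P
    rw [aeval_map_algebraMap, aeval_algebraMap_apply]
  have hker : ∀ P : A[X], aeval θ P = 0 ↔ f ∣ P := by
    intro P
    rw [← map_eq_zero_iff _ hinjSL, haev, ← minpoly.dvd_iff, ← hmin]
    exact Polynomial.map_dvd_map _ hinjAK hfm
  have hone : ∀ s : S, ∃ (c : A) (P : A[X]), c ≠ 0 ∧ algebraMap A S c * s = aeval θ P := by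
    intro s
    have hs : algebraMap S L s ∈ IntermediateField.adjoin K {algebraMap S L θ} := by
      rw [hθ]; trivial
    rw [← IntermediateField.mem_toSubalgebra,
      IntermediateField.adjoin_simple_toSubalgebra_of_isAlgebraic hintθ.isAlgebraic,
      Algebra.adjoin_singleton_eq_range_aeval] at hs
    obtain ⟨Q, hQ⟩ := hs
    obtain ⟨c, hc, h⟩ := IsLocalization.integerNormalization_spec A⁰ Q
    refine ⟨c, IsLocalization.integerNormalization A⁰ Q, nonZeroDivisors.ne_zero hc, hinjSL ?_⟩
    rw [haev, h, ← algebraMap_smul K c Q, map_smul]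
    change _ = _ • (aeval ((algebraMap S L) θ)).toRingHom Q
    rw [hQ, map_mul, ← IsScalarTower.algebraMap_apply, Algebra.smul_def,
      ← IsScalarTower.algebraMap_apply]
  choose c P hc hP using hone
  obtain ⟨t, ht⟩ := (Algebra.FiniteType.out : (⊤ : Subalgebra A S).FG)
  refine ⟨θ, f, ∏ x ∈ t, c x, hfm, hmin ▸ minpoly.irreducible hintθ,
    Finset.prod_ne_zero_iff.2 fun x _ => hc x, ?_, hker, ?_⟩
  · rw [← Module.finrank_eq_rank, hfdeg, e1]
  · intro s
    have hs : s ∈ Algebra.adjoin A (t : Set S) := by rw [ht]; trivial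
    induction hs using Algebra.adjoin_induction with
    | mem x hx =>
      obtain ⟨e, he⟩ := Finset.dvd_prod_of_mem c hx
      refine ⟨1, C e * P x, ?_⟩
      rw [he, pow_one, map_mul, map_mul, aeval_C, ← hP]
      ring
    | algebraMap r => exact ⟨0, C r, by simp⟩
    | add x y _ _ hx hy =>
      obtain ⟨N, Q, h⟩ := hx
      obtain ⟨N', Q', h'⟩ := hy
      refine ⟨N + N', C (∏ x ∈ t, c x) ^ N' * Q + C (∏ x ∈ t, c x) ^ N * Q', ?_⟩
      rw [map_add, map_mul, map_mul, map_pow, map_pow, aeval_C, ← h, ← h']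
      ring
    | mul x y _ _ hx hy =>
      obtain ⟨N, Q, h⟩ := hx
      obtain ⟨N', Q', h'⟩ := hy
      refine ⟨N + N', Q * Q', ?_⟩
      rw [map_mul, ← h, ← h']
      ring

/-- Extension of a ring map along a localization-like map. -/
theorem exists_hom_of_denominators {R S M : Type*} [CommRing R] [CommRing S] [Field M]
    (ev : R →+* S) (π : R →+* M) (c : R) (hker : ∀ r, ev r = 0 → π r = 0) (hc : π c ≠ 0)
    (hS : ∀ s : S, ∃ (N : ℕ) (P : R), ev c ^ N * s = ev P) :
    ∃ φ : S →+* M, ∀ r, φ (ev r) = π r := by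
  choose N P h using hS
  have key : ∀ (s : S) (n : ℕ) (Q : R), ev c ^ n * s = ev Q →
      π (P s) / π c ^ N s = π Q / π c ^ n := by
    intro s n Q hQ
    rw [div_eq_div_iff (pow_ne_zero _ hc) (pow_ne_zero _ hc), ← sub_eq_zero]
    rw [← map_pow, ← map_pow, ← map_mul, ← map_mul, ← map_sub]
    apply hker
    rw [map_sub, map_mul, map_mul, ← h, ← hQ, map_pow, map_pow]
    ring
  let φ : S →+* M :=
    { toFun := fun s => π (P s) / π c ^ N s
      map_one' := by rw [key 1 0 1 (by simp)]; simp
      map_zero' := by rw [key 0 0 0 (by simp)]; simp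
      map_add' := fun x y => by
        rw [key (x + y) (N x + N y) (c ^ N y * P x + c ^ N x * P y)
          (by rw [map_add, map_mul, map_mul, ← h, ← h, map_pow, map_pow]; ring)]
        simp only [map_add, map_mul, map_pow]
        field_simp
        ring
      map_mul' := fun x y => by
        rw [key (x * y) (N x + N y) (P x * P y) (by rw [map_mul, ← h, ← h]; ring)]
        simp only [map_mul]
        field_simp
        ring }
  refine ⟨φ, fun r => ?_⟩
  change π (P (ev r)) / π c ^ N (ev r) = _
  rw [key (ev r) 0 r (by simp)]
  simp

theorem resCanon_eq_zero_iff {S : Type*} [CommRing S] (q : Ideal S) [q.IsPrime] (s : S) :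
    resCanon S q s = 0 ↔ s ∈ q := by
  unfold resCanon
  rw [RingHom.comp_apply, map_eq_zero_iff _ (IsFractionRing.injective (S ⧸ q) (resField S q)),
    Ideal.Quotient.eq_zero_iff_mem]

theorem resFieldMap_resCanon {R S : Type*} [CommRing R] [CommRing S] (f : R →+* S)
    (p : Ideal R) (q : Ideal S) [p.IsPrime] [q.IsPrime] (h : q.comap f = p) (a : R) :
    resFieldMap f p q h (resCanon R p a) = resCanon S q (f a) := by
  unfold resFieldMap resCanon
  rw [RingHom.comp_apply, IsFractionRing.lift_algebraMap]
  simp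

open Polynomial in
theorem basicHilbertSet_of_good {A S : Type u} [CommRing A] [IsDomain A] [CommRing S] [IsDomain S]
    (h : A →+* S) (θ : S) (f : A[X]) (c : A) (hf : f.Monic)
    (hrank : fracRank h = f.natDegree)
    (hker : ∀ P : A[X], eval₂ h θ P = 0 ↔ f ∣ P)
    (hS : ∀ s : S, ∃ (N : ℕ) (P : A[X]), h c ^ N * s = eval₂ h θ P) :
    irreduciblePolySet f ∩ {p : PrimeSpectrum A | c ∉ p.asIdeal} ⊆ basicHilbertSet h := by
  rintro p ⟨hirr, hcp⟩
  replace hirr : Irreducible (f.map (resCanon A p.asIdeal)) := hirr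
  replace hcp : c ∉ p.asIdeal := hcp
  have : Fact (Irreducible (f.map (resCanon A p.asIdeal))) := ⟨hirr⟩
  let M := AdjoinRoot (f.map (resCanon A p.asIdeal))
  let π : A[X] →+* M := (AdjoinRoot.mk _).comp (mapRingHom (resCanon A p.asIdeal))
  have hπC : ∀ a, π (C a) = AdjoinRoot.of _ (resCanon A p.asIdeal a) := by
    intro a
    simp [π]
  have hπC0 : ∀ a, π (C a) = 0 ↔ a ∈ p.asIdeal := by
    intro a
    rw [hπC, map_eq_zero_iff _ (RingHom.injective _), resCanon_eq_zero_iff]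
  obtain ⟨φ, hφ⟩ := exists_hom_of_denominators (eval₂RingHom h θ) π (C c)
    (by
      intro r hr
      obtain ⟨g, rfl⟩ := (hker r).1 hr
      simp [π])
    (by rw [Ne, hπC0]; exact hcp)
    (by
      intro s
      obtain ⟨N, P, e⟩ := hS s
      exact ⟨N, P, by simpa using e⟩)
  have hφh : ∀ a, φ (h a) = π (C a) := by
    intro a
    rw [← hφ]; simp
  -- any prime over `p`
  have main : ∀ q : PrimeSpectrum S, ∀ hq : q.asIdeal.comap h = p.asIdeal,
      ∃ ψ : M →+* resField S q.asIdeal,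
        (∀ x, ψ (AdjoinRoot.of _ x) = resFieldMap h p.asIdeal q.asIdeal hq x) ∧
        ∀ s, ψ (φ s) = resCanon S q.asIdeal s := by
    intro q hq
    have hcomp : (resFieldMap h p.asIdeal q.asIdeal hq).comp (resCanon A p.asIdeal) =
        (resCanon S q.asIdeal).comp h := by
      ext a
      exact resFieldMap_resCanon h _ _ hq a
    have hroot : (f.map (resCanon A p.asIdeal)).eval₂ (resFieldMap h p.asIdeal q.asIdeal hq)
        (resCanon S q.asIdeal θ) = 0 := by
      rw [eval₂_map, hcomp, ← hom_eval₂, (hker f).2 dvd_rfl, map_zero]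
    let ψ : M →+* resField S q.asIdeal := AdjoinRoot.lift _ _ hroot
    have hψπ : ∀ P : A[X], ψ (π P) = resCanon S q.asIdeal (eval₂ h θ P) := by
      intro P
      have e0 : ψ (π P) = (P.map (resCanon A p.asIdeal)).eval₂
          (resFieldMap h p.asIdeal q.asIdeal hq) (resCanon S q.asIdeal θ) :=
        AdjoinRoot.lift_mk hroot _
      rw [e0, eval₂_map, hcomp, ← hom_eval₂]
    refine ⟨ψ, fun x => AdjoinRoot.lift_of hroot, fun s => ?_⟩
    obtain ⟨N, P, e⟩ := hS s
    have hne : resCanon S q.asIdeal (h c) ≠ 0 := by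
      rw [Ne, resCanon_eq_zero_iff]
      intro hc
      apply hcp
      rw [← hq]
      exact hc
    apply mul_left_cancel₀ (pow_ne_zero N hne)
    have e1 : resCanon S q.asIdeal (h c) = ψ (φ (h c)) := by
      rw [hφh, hψπ, eval₂_C]
    rw [← map_pow (resCanon S q.asIdeal), ← map_mul (resCanon S q.asIdeal), e, ← hψπ, map_pow, e1,
      ← map_pow, ← map_pow, ← map_mul, ← map_mul, e]
    exact congrArg ψ (hφ P)
  refine ⟨⟨⟨RingHom.ker φ, RingHom.ker_isPrime φ⟩, ?_, ?_⟩, ?_⟩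
  · ext a
    rw [Ideal.mem_comap, RingHom.mem_ker, hφh, hπC0]
  · intro q hq
    obtain ⟨ψ, -, hψ⟩ := main q hq
    ext s
    change s ∈ q.asIdeal ↔ s ∈ RingHom.ker φ
    rw [← resCanon_eq_zero_iff, ← hψ, map_eq_zero_iff _ ψ.injective, RingHom.mem_ker]
  · intro q hq
    obtain ⟨ψ, hψ1, hψ⟩ := main q hq
    have hsurj : Function.Surjective ψ := by
      intro z
      obtain ⟨x, y, hy, rfl⟩ := IsFractionRing.div_surjective (A := S ⧸ q.asIdeal) z
      obtain ⟨x, rfl⟩ := Ideal.Quotient.mk_surjective x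
      obtain ⟨y, rfl⟩ := Ideal.Quotient.mk_surjective y
      refine ⟨φ x / φ y, ?_⟩
      rw [map_div₀, hψ, hψ]
      rfl
    unfold resRank
    rw [dif_pos hq, hrank]
    let := (resFieldMap h p.asIdeal q.asIdeal hq).toAlgebra
    let e : M ≃ₗ[resField A p.asIdeal] resField S q.asIdeal :=
      LinearEquiv.ofBijective
        { toFun := ψ
          map_add' := map_add ψ
          map_smul' := fun r x => by
            rw [RingHom.id_apply, Algebra.smul_def, Algebra.smul_def, map_mul]
            congr 1
            exact hψ1 r }
        ⟨ψ.injective, hsurj⟩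
    rw [← e.rank_eq]
    have := (AdjoinRoot.powerBasis (f := f.map (resCanon A p.asIdeal)) hirr.ne_zero).finite
    have := (AdjoinRoot.powerBasis (f := f.map (resCanon A p.asIdeal)) hirr.ne_zero).finrank
    rw [← Module.finrank_eq_rank, this, AdjoinRoot.powerBasis_dim, hf.natDegree_map]

open Polynomial in
theorem exists_poly_of_ext {A S : Type u} [CommRing A] [IsDomain A] [CharZero A]
    [CommRing S] [IsDomain S] (h : A →+* S) (inj : Function.Injective h) (ft : h.FiniteType)
    (alg : h.IsAlgebraicOver) :
    ∃ (f : A[X]) (c : A), f.Monic ∧ Irreducible (f.map (algebraMap A (FractionRing A))) ∧ c ≠ 0 ∧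
      irreduciblePolySet f ∩ {p : PrimeSpectrum A | c ∉ p.asIdeal} ⊆ basicHilbertSet h := by
  let : Algebra A S := h.toAlgebra
  have : FaithfulSMul A S := (faithfulSMul_iff_algebraMap_injective A S).2 inj
  have : Algebra.IsAlgebraic A S := ⟨fun s => alg s⟩
  have : Algebra.FiniteType A S := ft
  let algKL : Algebra (FractionRing A) (FractionRing S) :=
    (IsFractionRing.lift (g := (algebraMap S (FractionRing S)).comp h)
      ((IsFractionRing.injective S (FractionRing S)).comp inj) :
        FractionRing A →+* FractionRing S).toAlgebra
  have : IsScalarTower A (FractionRing A) (FractionRing S) := by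
    refine IsScalarTower.of_algebraMap_eq fun a => ?_
    rw [IsScalarTower.algebraMap_apply A S (FractionRing S)]
    exact (IsFractionRing.lift_algebraMap (K := FractionRing A)
      (g := (algebraMap S (FractionRing S)).comp h)
      ((IsFractionRing.injective S (FractionRing S)).comp inj) a).symm
  have : CharZero (FractionRing A) :=
    charZero_of_injective_algebraMap (IsFractionRing.injective A (FractionRing A))
  obtain ⟨θ, f, c, hf, hirr, hc, hrank, hker, hS⟩ :=
    exists_good_primitive (A := A) (S := S) (K := FractionRing A) (L := FractionRing S)
  refine ⟨f, c, hf, hirr, hc, basicHilbertSet_of_good h θ f c hf ?_ hker hS⟩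
  unfold fracRank
  rw [dif_pos inj]
  exact hrank

/-- **Hilbert sets contain sets defined by irreducibility of polynomials.**
Let `k₀` be a field of characteristic zero and `B₀` a finitely generated `k₀`-algebra that is
an integral domain.  For every Hilbert subset `H` of `Spec(B₀)` there exist finitely many monic
polynomials `f 0, …, f (m-1) ∈ B₀[y]`, each irreducible in `Frac(B₀)[y]`, and a nonzero
`b ∈ B₀` such that `H_{B₀}(f 0, …, f (m-1)) ∩ D(b) ⊆ H`. -/
theorem hilbertSet_contains_irreduciblePolySet
    (k₀ : Type*) [Field k₀] [CharZero k₀]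
    (B₀ : Type u) [CommRing B₀] [IsDomain B₀] [Algebra k₀ B₀] [Algebra.FiniteType k₀ B₀]
    (H : Set (PrimeSpectrum B₀)) (hH : IsHilbertSet H) :
    ∃ (m : ℕ) (f : Fin m → Polynomial B₀) (b : B₀),
      (∀ i, (f i).Monic) ∧
      (∀ i, Irreducible ((f i).map (algebraMap B₀ (FractionRing B₀)))) ∧
      b ≠ 0 ∧
      (⋂ i, irreduciblePolySet (f i)) ∩ {p : PrimeSpectrum B₀ | b ∉ p.asIdeal} ⊆ H := by
  obtain ⟨r, E, b, hb, rfl⟩ := hH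
  have : CharZero B₀ := charZero_of_injective_algebraMap (algebraMap k₀ B₀).injective
  choose f c hf hirr hc hsub using fun i =>
    exists_poly_of_ext (E i).hom (E i).inj (E i).ft (E i).alg
  refine ⟨r, f, b * ∏ i, c i, hf, hirr,
    mul_ne_zero hb (Finset.prod_ne_zero_iff.2 fun i _ => hc i), ?_⟩
  rintro p ⟨hp, hbp⟩
  replace hbp : b * ∏ i, c i ∉ p.asIdeal := hbp
  refine ⟨Set.mem_iInter.2 fun i => hsub i ⟨Set.mem_iInter.1 hp i, fun hci => hbp ?_⟩,
    fun hbm => hbp (Ideal.mul_mem_right _ _ hbm)⟩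
  exact Ideal.mul_mem_left _ _ (Ideal.mem_of_dvd _ (Finset.dvd_prod_of_mem c (Finset.mem_univ i)) hci)
end

section
/- Let k be an algebraically closed field of characteristic zero, k₀ ⊆ k a subfield finitely generated over ℚ, B a finitely generated k-algebra that is an integral domain, and B₀ ⊆ B a finitely generated k₀-subalgebra such that the canonical map B₀ ⊗_{k₀} k → B is an isomorphism. Let H be a Hilbert subset of Spec(B₀) and let 𝓗 ⊆ Hom_{k-alg}(B,k) be the set of all c whose restriction to B₀ has kernel belonging to H. Then there exist finitely many monic polynomials f₁,…,f_r ∈ B₀[y], each irreducible in Frac(B₀)[y], and a nonzero g ∈ B₀, such that every c ∈ Hom_{k-alg}(B,k) with c(g) ≠ 0 and with each specialized polynomial fᵢ^c irreducible in k₀(c(B₀))[y] belongs to 𝓗; here fᵢ^c is obtained by applying c to the coefficients of fᵢ, and k₀(c(B₀)) is the subfield of k generated by k₀ and the image c(B₀). -/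
open Polynomial in
lemma rank_eq_of_adjoin_top {K L : Type*} [Field K] [Field L] [Algebra K L] (α : L)
    (f : K[X]) (hf : f.Monic) (hirr : Irreducible f) (h0 : aeval α f = 0)
    (htop : IntermediateField.adjoin K {α} = ⊤) :
    Module.rank K L = f.natDegree := by
  have hint : IsIntegral K α := ⟨f, hf, h0⟩
  have hmin : f = minpoly K α := minpoly.eq_of_irreducible_of_monic hirr h0 hf
  have hfd : FiniteDimensional K (IntermediateField.adjoin K {α}) :=
    IntermediateField.adjoin.finiteDimensional hint
  rw [htop] at hfd
  have hfd' : FiniteDimensional K L :=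
    Module.Finite.equiv (IntermediateField.topEquiv (F := K) (E := L)).toLinearEquiv
  rw [← Module.finrank_eq_rank, ← IntermediateField.finrank_top', ← htop,
    IntermediateField.adjoin.finrank hint, hmin]

open Polynomial nonZeroDivisors in
lemma hilbert_setup (R S K F : Type*) [CommRing R] [IsDomain R] [CharZero R] [CommRing S]
    [IsDomain S] [Field K] [Field F] [Algebra R S] [Algebra R K] [Algebra R F] [Algebra S F]
    [Algebra K F] [IsScalarTower R S F] [IsScalarTower R K F] [IsFractionRing R K]
    [IsFractionRing S F] [FaithfulSMul R S] [Algebra.FiniteType R S] [Algebra.IsAlgebraic R S] :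
    ∃ (α : S) (f : R[X]) (g : R), f.Monic ∧ Irreducible (f.map (algebraMap R K)) ∧
      aeval α f = 0 ∧ (∀ P : R[X], aeval α P = 0 → f ∣ P) ∧
      Module.rank K F = f.natDegree ∧ g ≠ 0 ∧
      ∀ s : S, ∃ (N : ℕ) (P : R[X]), algebraMap R S g ^ N * s = aeval α P := by
  have : CharZero K := charZero_of_injective_algebraMap (IsFractionRing.injective R K)
  have hSF : Function.Injective (algebraMap S F) := IsFractionRing.injective S F
  have hRK : Function.Injective (algebraMap R K) := IsFractionRing.injective R K
  have halg : Algebra.IsAlgebraic K F := by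
    have hRF : Function.Injective (algebraMap R F) := by
      rw [IsScalarTower.algebraMap_eq R S F]
      exact hSF.comp (FaithfulSMul.algebraMap_injective R S)
    have hRF' : FaithfulSMul R F := (faithfulSMul_iff_algebraMap_injective R F).2 hRF
    have hRF2 : Module.IsTorsionFree R F := hRF'.to_isTorsionFree
    have h1 : Algebra.IsAlgebraic R F :=
      (IsFractionRing.isAlgebraic_iff' R S F).1 inferInstance
    exact (IsFractionRing.comap_isAlgebraic_iff (A := R) (K := K) (C := F)).1 h1
  have hfd : FiniteDimensional K F := by
    have h1 : Algebra.EssFiniteType S F := Algebra.EssFiniteType.of_isLocalization F S⁰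
    have h2 : Algebra.EssFiniteType R F := Algebra.EssFiniteType.comp R S F
    have h3 : Algebra.EssFiniteType K F := Algebra.EssFiniteType.of_comp R K F
    exact Algebra.finite_of_essFiniteType_of_isAlgebraic
  obtain ⟨β, hβ⟩ := Field.exists_primitive_element K F
  -- scaling
  have hscale : ∀ r : R, r ≠ 0 → ∀ β : F, IntermediateField.adjoin K {β} = ⊤ →
      IntermediateField.adjoin K {algebraMap R F r * β} = ⊤ := by
    intro r hr β hβ
    rw [eq_top_iff, ← hβ, IntermediateField.adjoin_simple_le_iff]
    have hr' : algebraMap R K r ≠ 0 := by simpa using hr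
    have e : β = (algebraMap R K r)⁻¹ • (algebraMap R F r * β) := by
      rw [IsScalarTower.algebraMap_apply R K F, ← Algebra.smul_def, smul_smul,
        inv_mul_cancel₀ hr', one_smul]
    have := IntermediateField.smul_mem (IntermediateField.adjoin K {algebraMap R F r * β})
      (IntermediateField.mem_adjoin_simple_self K (algebraMap R F r * β))
      (x := (algebraMap R K r)⁻¹)
    rwa [← e] at this
  -- move into S
  obtain ⟨β₁, hβ₁⟩ : ∃ β₁ : S, IntermediateField.adjoin K {algebraMap S F β₁} = ⊤ := by
    obtain ⟨s, t, ht, rfl⟩ := IsFractionRing.div_surjective (A := S) β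
    obtain ⟨r, hr, u, hu⟩ := (Algebra.IsAlgebraic.isAlgebraic (R := R) t).exists_nonzero_dvd ht
    refine ⟨u * s, ?_⟩
    have := hscale r hr _ hβ
    have ht0 : algebraMap S F t ≠ 0 := by
      simpa using nonZeroDivisors.ne_zero ht
    rw [IsScalarTower.algebraMap_apply R S F, hu, map_mul] at this
    convert this using 3
    rw [map_mul]; field_simp
  -- clear denominators in the minimal polynomial
  obtain ⟨d, hd⟩ := IsLocalization.exist_integer_multiples_of_finset R⁰
    (minpoly K (algebraMap S F β₁)).coeffs
  set m := minpoly K (algebraMap S F β₁) with hm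
  have hint : ∀ x : F, IsIntegral K x := fun x => Algebra.IsIntegral.isIntegral x
  have hmm : m.Monic := minpoly.monic (hint _)
  have hd0 : (d : R) ≠ 0 := nonZeroDivisors.ne_zero d.2
  set α : S := algebraMap R S d * β₁ with hα
  have hαtop : IntermediateField.adjoin K {algebraMap S F α} = ⊤ := by
    rw [hα, map_mul, ← IsScalarTower.algebraMap_apply]
    exact hscale _ hd0 _ hβ₁
  set m' := m.scaleRoots (algebraMap R K d) with hm'
  have hmm' : m'.Monic := (monic_scaleRoots_iff _).2 hmm
  have hroot : aeval (algebraMap S F α) m' = 0 := by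
    have := scaleRoots_aeval_eq_zero (r := algebraMap R K d) (minpoly.aeval K (algebraMap S F β₁))
    rw [hα, map_mul, ← IsScalarTower.algebraMap_apply, IsScalarTower.algebraMap_apply R K F]
    exact this
  have hfin : ∀ x : F, IntermediateField.adjoin K {x} = ⊤ →
      (minpoly K x).natDegree = Module.finrank K F := by
    intro x hx
    rw [← IntermediateField.adjoin.finrank (hint x), hx, IntermediateField.finrank_top']
  have hmin : m' = minpoly K (algebraMap S F α) := by
    refine (eq_of_monic_of_dvd_of_natDegree_le (minpoly.monic (hint _)) hmm'
      (minpoly.dvd K _ hroot) ?_)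
    rw [hm', natDegree_scaleRoots, hfin _ hαtop, hm, hfin _ hβ₁]
  have hlift : m' ∈ lifts (algebraMap R K) := by
    rw [lifts_iff_coeff_lifts]
    intro n
    rw [hm', coeff_scaleRoots]
    by_cases hn0 : m.coeff n = 0
    · exact ⟨0, by simp [hn0]⟩
    have hle : n ≤ m.natDegree := le_natDegree_of_ne_zero hn0
    rcases hle.eq_or_lt with h | h
    · subst h
      exact ⟨1, by simp [hmm.coeff_natDegree]⟩
    · obtain ⟨c, hc⟩ := hd _ (coeff_mem_coeffs hn0)
      refine ⟨c * (d : R) ^ (m.natDegree - n - 1), ?_⟩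
      obtain ⟨j, hj⟩ : ∃ j, m.natDegree - n = j + 1 := ⟨m.natDegree - n - 1, by omega⟩
      rw [map_mul, hc, Algebra.smul_def, map_pow, hj, Nat.add_sub_cancel, pow_succ]
      ring
  obtain ⟨f, hf1, hf2, hf3⟩ := lifts_and_natDegree_eq_and_monic hlift hmm'
  have hirr : Irreducible (f.map (algebraMap R K)) := by
    rw [hf1, hmin]; exact minpoly.irreducible (hint _)
  have hmapaev : ∀ P : R[X], aeval (algebraMap S F α) (P.map (algebraMap R K)) =
      algebraMap S F (aeval α P) := by
    intro P
    rw [aeval_map_algebraMap, aeval_algebraMap_apply]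
  have hfroot : aeval α f = 0 := by
    apply hSF
    rw [← hmapaev, hf1, hroot, map_zero]
  have hdvd : ∀ P : R[X], aeval α P = 0 → f ∣ P := by
    intro P hP
    rw [← map_dvd_map _ hRK hf3, hf1, hmin]
    apply minpoly.dvd
    rw [hmapaev, hP, map_zero]
  have hrank := rank_eq_of_adjoin_top (algebraMap S F α) _ (hf3.map (algebraMap R K)) hirr
    (by rw [hf1, hroot]) hαtop
  -- each element
  have hel : ∀ s : S, ∃ (g : R) (P : R[X]), g ≠ 0 ∧ algebraMap R S g * s = aeval α P := by
    intro s
    have hs : algebraMap S F s ∈ IntermediateField.adjoin K {algebraMap S F α} := by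
      rw [hαtop]; trivial
    rw [← IntermediateField.mem_toSubalgebra,
      IntermediateField.adjoin_simple_toSubalgebra_of_isAlgebraic
        (Algebra.IsAlgebraic.isAlgebraic _), Algebra.adjoin_singleton_eq_range_aeval] at hs
    obtain ⟨Q, hQ⟩ := hs
    obtain ⟨b, hb⟩ := IsLocalization.integerNormalization_map_to_map R⁰ Q
    refine ⟨b, IsLocalization.integerNormalization R⁰ Q, nonZeroDivisors.ne_zero b.2, ?_⟩
    apply hSF
    rw [← hmapaev, hb, map_mul, ← IsScalarTower.algebraMap_apply, ← Algebra.smul_def]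
    rw [← algebraMap_smul K (b : R) Q, map_smul, algebraMap_smul]
    congr 1
    exact hQ.symm
  choose G Q hG hQ using hel
  obtain ⟨T, hT⟩ := Algebra.FiniteType.out (R := R) (A := S)
  refine ⟨α, f, ∏ t ∈ T, G t, hf3, hirr, hfroot, hdvd, ?_, ?_, ?_⟩
  · rw [hrank, hf3.natDegree_map]
  · exact Finset.prod_ne_zero_iff.2 fun t _ => hG t
  · intro s
    have hs : s ∈ Algebra.adjoin R (T : Set S) := by rw [hT]; trivial
    set g := ∏ t ∈ T, G t
    induction hs using Algebra.adjoin_induction with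
    | mem x hx =>
      obtain ⟨e, he⟩ := Finset.dvd_prod_of_mem G hx
      refine ⟨1, C e * Q x, ?_⟩
      rw [pow_one, map_mul, ← hQ, aeval_C, ← mul_assoc, ← map_mul]
      congr 2
      rw [mul_comm e]; exact he
    | algebraMap r => exact ⟨0, C r, by simp⟩
    | add x y _ _ hx hy =>
      obtain ⟨N, P, h⟩ := hx
      obtain ⟨N', P', h'⟩ := hy
      refine ⟨N + N', C g ^ N' * P + C g ^ N * P', ?_⟩
      simp only [map_add, map_mul, map_pow, aeval_C, ← h, ← h']
      ring
    | mul x y _ _ hx hy =>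
      obtain ⟨N, P, h⟩ := hx
      obtain ⟨N', P', h'⟩ := hy
      refine ⟨N + N', P * P', ?_⟩
      simp only [map_mul, ← h, ← h']
      ring

open Polynomial in
lemma hilbert_spec {R S : Type*} [CommRing R] [IsDomain R] [CommRing S]
    [IsDomain S] [Algebra R S] (α : S) (f : R[X]) (g : R) (hf : f.Monic)
    (h0 : aeval α f = 0) (hdvd : ∀ P : R[X], aeval α P = 0 → f ∣ P)
    (hrank : fracRank (algebraMap R S) = f.natDegree)
    (hg : ∀ s : S, ∃ (N : ℕ) (P : R[X]), algebraMap R S g ^ N * s = aeval α P)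
    (p : PrimeSpectrum R) (hgp : g ∉ p.asIdeal)
    (hirr : Irreducible (f.map (resCanon R p.asIdeal))) :
    p ∈ basicHilbertSet (algebraMap R S) := by
  set ρ := resCanon R p.asIdeal with hρ
  have hρ0 : ∀ r, ρ r = 0 ↔ r ∈ p.asIdeal := by
    intro r
    simp [hρ, resCanon, Ideal.Quotient.eq_zero_iff_mem]
  have hρg : ∀ N : ℕ, ρ g ^ N ≠ 0 := fun N => pow_ne_zero _ (by rw [Ne, hρ0]; exact hgp)
  have hprime : Prime (f.map ρ) := hirr.prime
  have hCdvd : ∀ r : resField R p.asIdeal, f.map ρ ∣ C r → r = 0 := by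
    intro r hr
    by_contra hne
    exact hirr.not_isUnit (isUnit_of_dvd_unit hr (isUnit_C.2 (isUnit_iff_ne_zero.2 hne)))
  have hcancel : ∀ (N : ℕ) (P : (resField R p.asIdeal)[X]),
      f.map ρ ∣ C (ρ g) ^ N * P → f.map ρ ∣ P := by
    intro N P h
    refine (hprime.dvd_or_dvd h).resolve_left fun h => ?_
    rw [← C_pow] at h
    exact hρg N (hCdvd _ h)
  -- well-definedness
  have hwd : ∀ (s : S) (N N' : ℕ) (P P' : R[X]), algebraMap R S g ^ N * s = aeval α P →
      algebraMap R S g ^ N' * s = aeval α P' → f.map ρ ∣ P.map ρ → f.map ρ ∣ P'.map ρ := by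
    intro s N N' P P' h h' hP
    have h1 : aeval α (C g ^ N * P' - C g ^ N' * P) = 0 := by
      simp only [map_sub, map_mul, map_pow, aeval_C, ← h, ← h']
      ring
    have h2 := Polynomial.map_dvd ρ (hdvd _ h1)
    simp only [Polynomial.map_sub, Polynomial.map_mul, Polynomial.map_pow, map_C] at h2
    apply hcancel N
    have := dvd_add h2 (hP.mul_left (C (ρ g) ^ N'))
    rwa [sub_add_cancel] at this
  let q : Ideal S :=
    { carrier := {s | ∃ (N : ℕ) (P : R[X]), algebraMap R S g ^ N * s = aeval α P ∧
        f.map ρ ∣ P.map ρ}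
      zero_mem' := ⟨0, 0, by simp⟩
      add_mem' := by
        rintro x y ⟨N, P, h, hP⟩ ⟨N', P', h', hP'⟩
        refine ⟨N + N', C g ^ N' * P + C g ^ N * P', ?_, ?_⟩
        · simp only [map_add, map_mul, map_pow, aeval_C, ← h, ← h']
          ring
        · simp only [Polynomial.map_add, Polynomial.map_mul]
          exact dvd_add (hP.mul_left _) (hP'.mul_left _)
      smul_mem' := by
        rintro x y ⟨N, P, h, hP⟩
        obtain ⟨N', P', h'⟩ := hg x
        refine ⟨N + N', P' * P, ?_, ?_⟩
        · simp only [map_mul, ← h, ← h', smul_eq_mul]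
          ring
        · rw [Polynomial.map_mul]; exact hP.mul_left _ }
  have hmemq : ∀ s N P, algebraMap R S g ^ N * s = aeval α P → (s ∈ q ↔ f.map ρ ∣ P.map ρ) := by
    intro s N P h
    constructor
    · rintro ⟨N', P', h', hP'⟩
      exact hwd s _ _ _ _ h' h hP'
    · intro hP
      exact ⟨N, P, h, hP⟩
  have hqcomap : q.comap (algebraMap R S) = p.asIdeal := by
    ext r
    rw [Ideal.mem_comap, hmemq (algebraMap R S r) 0 (C r) (by simp), map_C, ← hρ0]
    constructor
    · exact hCdvd _
    · intro h; rw [h]; simp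
  have hqprime : q.IsPrime := by
    constructor
    · intro h
      rw [h, Ideal.comap_top] at hqcomap
      exact p.2.ne_top hqcomap.symm
    · intro x y hxy
      obtain ⟨N, P, h⟩ := hg x
      obtain ⟨N', P', h'⟩ := hg y
      rw [hmemq x N P h, hmemq y N' P' h']
      rw [hmemq (x * y) (N + N') (P * P') (by rw [map_mul, ← h, ← h']; ring),
        Polynomial.map_mul] at hxy
      exact hprime.dvd_or_dvd hxy
  have hdata : ∀ q' : PrimeSpectrum S, ∀ hq : q'.asIdeal.comap (algebraMap R S) = p.asIdeal,
      q'.asIdeal = q ∧ resRank (algebraMap R S) p q' = f.natDegree := by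
    intro q' hq'
    let alg := (resFieldMap (algebraMap R S) p.asIdeal q'.asIdeal hq').toAlgebra
    set σ := resCanon S q'.asIdeal with hσ
    have hσ0 : ∀ r, σ r = 0 ↔ r ∈ q'.asIdeal := by
      intro r
      simp [hσ, resCanon, Ideal.Quotient.eq_zero_iff_mem]
    have hcomm : ∀ r : R, algebraMap (resField R p.asIdeal) (resField S q'.asIdeal) (ρ r)
        = σ (algebraMap R S r) := by
      intro r
      change resFieldMap (algebraMap R S) p.asIdeal q'.asIdeal hq' (ρ r) = _
      simp [hρ, hσ, resCanon, resFieldMap]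
    have haev : ∀ P : R[X], aeval (σ α) (P.map ρ) = σ (aeval α P) := by
      intro P
      rw [aeval_def, eval₂_map, aeval_def, hom_eval₂]
      congr 1
      ext r
      exact hcomm r
    have hroot : aeval (σ α) (f.map ρ) = 0 := by rw [haev, h0, map_zero]
    have hmin := minpoly.eq_of_irreducible_of_monic hirr hroot (hf.map ρ)
    have hσg : ∀ N : ℕ, σ (algebraMap R S g) ^ N ≠ 0 := fun N => pow_ne_zero _ (by
      rw [← hcomm, Ne, map_eq_zero, hρ0]; exact hgp)
    constructor
    · ext s
      obtain ⟨N, P, h⟩ := hg s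
      rw [hmemq s N P h, hmin, minpoly.dvd_iff, haev, ← h, ← hσ0, map_mul, map_pow]
      simp [hσg N]
    · have htop : IntermediateField.adjoin (resField R p.asIdeal) {σ α} = ⊤ := by
        rw [eq_top_iff]
        intro x _
        set A := IntermediateField.adjoin (resField R p.asIdeal) {σ α}
        have hS : ∀ s, σ s ∈ A := by
          intro s
          obtain ⟨N, P, h⟩ := hg s
          have h1 : σ (algebraMap R S g) ^ N * σ s = aeval (σ α) (P.map ρ) := by
            rw [haev, ← h, map_mul, map_pow]
          have h2 : σ s = (σ (algebraMap R S g) ^ N)⁻¹ * aeval (σ α) (P.map ρ) := by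
            rw [← h1, inv_mul_cancel_left₀ (hσg N)]
          rw [h2]
          refine A.mul_mem (A.inv_mem (A.pow_mem ?_ N)) ?_
          · rw [← hcomm]; exact A.algebraMap_mem _
          · have := IntermediateField.mem_adjoin_simple_self (resField R p.asIdeal) (σ α)
            exact IntermediateField.algebra_adjoin_le_adjoin _ _
              (aeval_mem_adjoin_singleton _ _)
        obtain ⟨a, b, hb, rfl⟩ := IsFractionRing.div_surjective (A := S ⧸ q'.asIdeal) x
        obtain ⟨a, rfl⟩ := Ideal.Quotient.mk_surjective a
        obtain ⟨b, rfl⟩ := Ideal.Quotient.mk_surjective b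
        exact A.div_mem (hS a) (hS b)
      have := rank_eq_of_adjoin_top (σ α) _ (hf.map ρ) hirr hroot htop
      rw [hf.natDegree_map] at this
      rw [resRank, dif_pos hq']
      exact this
  refine ⟨⟨⟨q, hqprime⟩, hqcomap, ?_⟩, ?_⟩
  · intro q' hq'
    exact PrimeSpectrum.ext (hdata q' hq').1
  · intro q' hq'
    rw [hrank, (hdata q' hq').2]

open Polynomial in
lemma hilbert_key {R S : Type*} [CommRing R] [IsDomain R] [CharZero R] [CommRing S]
    [IsDomain S] (φ : R →+* S) (hinj : Function.Injective φ) (hft : φ.FiniteType)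
    (halg : φ.IsAlgebraicOver) :
    ∃ (f : R[X]) (g : R), f.Monic ∧ Irreducible (f.map (algebraMap R (FractionRing R))) ∧
      g ≠ 0 ∧ ∀ p : PrimeSpectrum R, g ∉ p.asIdeal →
        Irreducible (f.map (resCanon R p.asIdeal)) → p ∈ basicHilbertSet φ := by
  let a1 : Algebra R S := φ.toAlgebra
  have hφ : algebraMap R S = φ := rfl
  have h1 : FaithfulSMul R S := (faithfulSMul_iff_algebraMap_injective R S).2 hinj
  have h2 : Algebra.FiniteType R S := hft
  have h3 : Algebra.IsAlgebraic R S := ⟨fun s => halg s⟩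
  let a2 : Algebra (FractionRing R) (FractionRing S) :=
    (IsFractionRing.lift (g := (algebraMap S (FractionRing S)).comp φ)
      ((IsFractionRing.injective S (FractionRing S)).comp hinj) :
        FractionRing R →+* FractionRing S).toAlgebra
  have h4 : IsScalarTower R (FractionRing R) (FractionRing S) := by
    refine IsScalarTower.of_algebraMap_eq fun r => ?_
    rw [IsScalarTower.algebraMap_apply R S (FractionRing S)]
    exact (IsFractionRing.lift_algebraMap (g := (algebraMap S (FractionRing S)).comp φ)
      ((IsFractionRing.injective S (FractionRing S)).comp hinj) r).symm
  obtain ⟨α, f, g, hf, hirr, h0, hdvd, hrank, hg0, hg⟩ :=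
    hilbert_setup R S (FractionRing R) (FractionRing S)
  refine ⟨f, g, hf, hirr, hg0, fun p hgp hp => ?_⟩
  refine hilbert_spec α f g hf h0 hdvd ?_ hg p hgp hp
  rw [fracRank, dif_pos (show Function.Injective (algebraMap R S) from hinj)]
  exact hrank

open IntermediateField in
/-- **Geometric Hilbert sets contain sets defined by specialized irreducibility.**
Let `k` be an algebraically closed field of characteristic zero, `k₀ ⊆ k` a subfield finitely
generated over `ℚ`, `B` a finitely generated `k`-algebra that is an integral domain, and
`B₀ ⊆ B` a finitely generated `k₀`-subalgebra such that the canonical map `B₀ ⊗_{k₀} k → B` is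
an isomorphism.  Let `H` be a Hilbert subset of `Spec(B₀)` and let `𝓗 ⊆ Hom_{k-alg}(B,k)` be
the set of all `c` whose restriction to `B₀` has kernel belonging to `H`.  Then there exist
finitely many monic polynomials `f 0, …, f (r-1) ∈ B₀[y]`, each irreducible in
`Frac(B₀)[y]`, and a nonzero `g ∈ B₀`, such that every `c ∈ Hom_{k-alg}(B,k)` with
`c g ≠ 0` and with each specialized polynomial `(f i)^c` irreducible in `k₀(c(B₀))[y]`
belongs to `𝓗`; here `(f i)^c` is obtained by applying `c` to the coefficients of `f i`, and
`k₀(c(B₀))` is the subfield of `k` generated by `k₀` and the image `c(B₀)`. -/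
theorem geometric_hilbertSet_contains_specialization_set
    (k₀ : Type u) [Field k₀] [CharZero k₀]
    (hk₀fg : ∃ s : Finset k₀, IntermediateField.adjoin ℚ (s : Set k₀) = ⊤)
    (k : Type u) [Field k] [IsAlgClosed k] [CharZero k] [Algebra k₀ k]
    (B : Type u) [CommRing B] [IsDomain B] [Algebra k B] [Algebra.FiniteType k B]
    (B₀ : Type u) [CommRing B₀] [IsDomain B₀] [Algebra k₀ B₀] [Algebra.FiniteType k₀ B₀]
    [Algebra B₀ B] [Algebra k₀ B] [IsScalarTower k₀ B₀ B] [IsScalarTower k₀ k B]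
    (hB₀B : Function.Injective (algebraMap B₀ B))
    (hiso : Function.Bijective
      (Algebra.TensorProduct.productMap
        (IsScalarTower.toAlgHom k₀ B₀ B) (IsScalarTower.toAlgHom k₀ k B)))
    (H : Set (PrimeSpectrum B₀)) (hH : IsHilbertSet H) :
    ∃ (r : ℕ) (f : Fin r → Polynomial B₀) (g : B₀),
      (∀ i, (f i).Monic) ∧
      (∀ i, Irreducible ((f i).map (algebraMap B₀ (FractionRing B₀)))) ∧
      g ≠ 0 ∧
      ∀ c : B →ₐ[k] k, c (algebraMap B₀ B g) ≠ 0 →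
        (∀ i, Irreducible ((f i).map
          (((c : B →+* k).comp (algebraMap B₀ B)).codRestrict
            (IntermediateField.adjoin k₀
              (Set.range ((c : B →+* k).comp (algebraMap B₀ B))))
            (fun x => IntermediateField.subset_adjoin k₀ _ ⟨x, rfl⟩)))) →
        (⟨RingHom.ker ((c : B →+* k).comp (algebraMap B₀ B)),
            RingHom.ker_isPrime _⟩ : PrimeSpectrum B₀) ∈ H := by
  have : CharZero B₀ := charZero_of_injective_algebraMap (FaithfulSMul.algebraMap_injective k₀ B₀)
  obtain ⟨r, E, b, hb, rfl⟩ := hH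
  choose f g hf hirr hg hH using fun i => hilbert_key (E i).hom (E i).inj (E i).ft (E i).alg
  refine ⟨r, f, b * ∏ i, g i, hf, hirr,
    mul_ne_zero hb (Finset.prod_ne_zero_iff.2 fun i _ => hg i), ?_⟩
  intro c hc hci
  simp only [map_mul, map_prod] at hc
  refine ⟨Set.mem_iInter.2 fun i => ?_, ?_⟩
  · apply hH i
    · intro hmem
      have h0 : c (algebraMap B₀ B (g i)) = 0 := hmem
      exact hc (by rw [Finset.prod_eq_zero (Finset.mem_univ i) h0, mul_zero])
    · set ψ := ((c : B →+* k).comp (algebraMap B₀ B)).codRestrict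
            (IntermediateField.adjoin k₀
              (Set.range ((c : B →+* k).comp (algebraMap B₀ B))))
            (fun x => IntermediateField.subset_adjoin k₀ _ ⟨x, rfl⟩) with hψ
      have hker : RingHom.ker ψ = RingHom.ker ((c : B →+* k).comp (algebraMap B₀ B)) := by
        ext x
        rw [RingHom.mem_ker, RingHom.mem_ker, ← Subtype.coe_inj]
        rfl
      have hprime : (RingHom.ker ((c : B →+* k).comp (algebraMap B₀ B))).IsPrime :=
        RingHom.ker_isPrime _
      let χ₀ := Ideal.Quotient.lift (RingHom.ker ((c : B →+* k).comp (algebraMap B₀ B))) ψ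
        (fun a ha => by rwa [← hker] at ha)
      have hχ₀ : Function.Injective χ₀ :=
        RingHom.lift_injective_of_ker_le_ideal _ _ hker.le
      let χ : resField B₀ (RingHom.ker ((c : B →+* k).comp (algebraMap B₀ B))) →+* _ :=
        IsFractionRing.lift hχ₀
      have hcomp : χ.comp (resCanon B₀ _) = ψ := by
        refine RingHom.ext fun x => ?_
        exact (IsFractionRing.lift_algebraMap hχ₀ _).trans (Ideal.Quotient.lift_mk _ _ _)
      refine Polynomial.Monic.irreducible_of_irreducible_map χ _ ((hf i).map _) ?_
      rw [Polynomial.map_map, hcomp]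
      exact hci i
  · intro hmem
    have h0 : c (algebraMap B₀ B b) = 0 := hmem
    exact hc (by rw [h0, zero_mul])
end

section
/- Let k₀ be a field of characteristic zero and B₀ a finitely generated k₀-algebra that is an integral domain such that B₀ ⊗_{k₀} \bar{k₀} is an integral domain; let K₀ = Frac(B₀). Let 𝒮 be a scheme of finite type over Spec(B₀), let B₁ ⊆ \overline{K₀} be a finitely generated B₀-algebra, and let s : Spec(B₁) → 𝒮 be a morphism over Spec(B₀) such that the induced homomorphism of residue fields κ(s(ξ)) → κ(ξ) is an isomorphism, where ξ is the generic point of Spec(B₁). Then there exists a nonempty open subset U₁ of Spec(B₁) such that for every x₁ ∈ U₁ the induced homomorphism of residue fields κ(s(x₁)) → κ(x₁) is an isomorphism. -/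
open AlgebraicGeometry CategoryTheory

/-- On an integral scheme, a section vanishing at the generic point is zero. -/
lemma eval_generic_injective {X : Scheme.{0}} [IsIntegral X] (U : X.Opens)
    (hx : genericPoint X ∈ U) (f : Γ(X, U)) (h : X.evaluation U _ hx f = 0) : f = 0 := by
  rw [Scheme.evaluation_eq_zero_iff_notMem_basicOpen] at h
  rw [← basicOpen_eq_bot_iff]
  by_contra hne
  apply h
  have hne := TopologicalSpace.Opens.ne_bot_iff_nonempty _ |>.mp hne
  exact ((genericPoint_spec X).mem_open_set_iff (X.basicOpen f).isOpen).mpr (by simpa using hne)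

lemma eval_spreads {X Y : Scheme.{0}} [IsIntegral X] (s : X ⟶ Y)
    (h : Function.Surjective (s.residueFieldMap (genericPoint X))) (b : Γ(X, ⊤)) :
    ∃ W : X.Opens, genericPoint X ∈ W ∧ ∀ x ∈ W,
      X.Γevaluation x b ∈ (s.residueFieldMap x).hom.range := by
  obtain ⟨z, hz⟩ := h (X.Γevaluation _ b)
  obtain ⟨r, rfl⟩ := Y.residue_surjective _ z
  obtain ⟨V, hV, t, rfl⟩ := Y.presheaf.exists_germ_eq r
  have key : ∀ (x : X) (hx : x ∈ s ⁻¹ᵁ V), X.evaluation (s ⁻¹ᵁ V) x hx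
      (X.presheaf.map (homOfLE le_top).op b) = X.Γevaluation x b := by
    intro x hx
    change X.residue x (X.presheaf.germ _ x _ _) = X.residue x (X.presheaf.germ _ x _ _)
    exact congrArg _ (TopCat.Presheaf.germ_res_apply _ _ _ _ _)
  have hz' : s.residueFieldMap _ (Y.evaluation V _ hV t) = X.Γevaluation _ b := hz
  rw [Scheme.evaluation_naturality_apply, ← key _ hV] at hz'
  have e := eval_generic_injective (s ⁻¹ᵁ V) hV
    (s.app V t - X.presheaf.map (homOfLE le_top).op b) (by rw [map_sub, hz', sub_self])
  rw [sub_eq_zero] at e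
  refine ⟨s ⁻¹ᵁ V, hV, fun x hx => ⟨Y.evaluation V _ hx t, ?_⟩⟩
  refine (Scheme.evaluation_naturality_apply s x hx t).trans ?_
  rw [e]
  exact key x hx

/-- The residue field of `Spec R` at `x` consists of fractions of values of elements of `R`. -/
lemma residue_spec_frac (R : CommRingCat.{0}) (x : Spec R) (z : (Spec R).residueField x) :
    ∃ a b : R, z = (Spec R).Γevaluation x ((Scheme.ΓSpecIso R).inv a) /
      (Spec R).Γevaluation x ((Scheme.ΓSpecIso R).inv b) := by
  have hp : x.asIdeal.IsPrime := PrimeSpectrum.isPrime (R := R) x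
  obtain ⟨r, rfl⟩ := (Spec R).residue_surjective _ z
  let k : Algebra ↑R ↑((Spec R).presheaf.stalk x) := StructureSheaf.stalkAlgebra (↑R) x
  have : IsLocalization.AtPrime (↑((Spec R).presheaf.stalk x)) x.asIdeal :=
    StructureSheaf.IsLocalization.to_stalk R x
  obtain ⟨a, b, h⟩ := IsLocalization.exists_mk'_eq x.asIdeal.primeCompl r
  refine ⟨a, b, ?_⟩
  have hu : IsUnit (algebraMap R ((Spec R).presheaf.stalk x) b) := IsLocalization.map_units _ b
  have hu' := hu.map ((Spec R).residue x).hom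
  have := IsLocalization.mk'_spec ((Spec R).presheaf.stalk x) a b
  rw [h] at this
  have := congrArg ((Spec R).residue x).hom this
  rw [map_mul] at this
  exact eq_div_of_mul_eq hu'.ne_zero this

/-- **Residue field isomorphisms spread out from the generic point.**
Let `k₀` be a field of characteristic zero and `B₀` a finitely generated `k₀`-algebra that is
an integral domain such that `B₀ ⊗_{k₀} \bar{k₀}` is an integral domain; let
`K₀ = Frac(B₀)`.  Let `𝒮` be a scheme of finite type over `Spec B₀`, let
`B₁ ⊆ \overline{K₀}` be a finitely generated `B₀`-algebra, and let `s : Spec B₁ → 𝒮` be a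
morphism over `Spec B₀` such that the induced homomorphism of residue fields
`κ(s(ξ)) → κ(ξ)` is an isomorphism, where `ξ` is the generic point of `Spec B₁`.  Then there
is a nonempty open subset `U₁` of `Spec B₁` such that for every `x₁ ∈ U₁` the induced
homomorphism of residue fields `κ(s(x₁)) → κ(x₁)` is an isomorphism. -/
theorem residueField_iso_spreads_out
    (k₀ : Type) [Field k₀] [CharZero k₀]
    (B₀ : Type) [CommRing B₀] [IsDomain B₀] [Algebra k₀ B₀] [Algebra.FiniteType k₀ B₀]
    (hgeom : IsDomain (TensorProduct k₀ B₀ (AlgebraicClosure k₀)))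
    (B₁ : Type) [CommRing B₁] [IsDomain B₁] [Algebra B₀ B₁] [Algebra.FiniteType B₀ B₁]
    -- `B₁` is a subring of the algebraic closure of `K₀ = Frac B₀`, compatibly with `B₀`
    (ι : B₁ →+* AlgebraicClosure (FractionRing B₀))
    (hι : Function.Injective ι)
    (hcomp : ι.comp (algebraMap B₀ B₁) =
      (algebraMap (FractionRing B₀) (AlgebraicClosure (FractionRing B₀))).comp
        (algebraMap B₀ (FractionRing B₀)))
    -- `𝒮` is of finite type over `Spec B₀`
    (𝒮 : Scheme) (p : 𝒮 ⟶ Spec (CommRingCat.of B₀))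
    [LocallyOfFiniteType p] [QuasiCompact p]
    -- a morphism `s` over `Spec B₀`
    (s : Spec (CommRingCat.of B₁) ⟶ 𝒮)
    (hover : s ≫ p = Spec.map (CommRingCat.ofHom (algebraMap B₀ B₁)))
    -- at the generic point `ξ` of `Spec B₁`, the residue field map is an isomorphism
    (hgen : IsIso (s.residueFieldMap
      ((⟨⊥, Ideal.bot_prime⟩ : PrimeSpectrum B₁) : ↑(Spec (CommRingCat.of B₁))))) :
    ∃ U₁ : (Spec (CommRingCat.of B₁)).Opens, U₁.carrier.Nonempty ∧
      ∀ x₁ ∈ U₁, IsIso (s.residueFieldMap x₁) := by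
  have hg : (⟨⊥, Ideal.bot_prime⟩ : PrimeSpectrum B₁) =
      genericPoint (Spec (CommRingCat.of B₁)) :=
    (genericPoint_eq_bot_of_affine (CommRingCat.of B₁)).symm
  have hsurj : Function.Surjective
      (s.residueFieldMap (genericPoint (Spec (CommRingCat.of B₁)))) := by
    rw [← hg]
    exact (ConcreteCategory.bijective_of_isIso _).2
  choose W hW hWb using eval_spreads s hsurj
  obtain ⟨T, hT⟩ := (Algebra.FiniteType.out : (⊤ : Subalgebra B₀ B₁).FG)
  refine ⟨T.inf fun b => W ((Scheme.ΓSpecIso (CommRingCat.of B₁)).inv b),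
    ⟨genericPoint (Spec (CommRingCat.of B₁)), ?_⟩, ?_⟩
  · rw [TopologicalSpace.Opens.carrier_eq_coe, TopologicalSpace.Opens.coe_finset_inf]
    simp only [Finset.inf_eq_iInf, Set.iInf_eq_iInter, Set.mem_iInter, Function.comp]
    exact fun b _ => hW _
  intro x hx
  have hx' : ∀ b ∈ T, x ∈ W ((Scheme.ΓSpecIso (CommRingCat.of B₁)).inv b) := fun b hb =>
    (Finset.inf_le (f := fun b => W ((Scheme.ΓSpecIso (CommRingCat.of B₁)).inv b)) hb) hx
  let ev : B₁ →+* (Spec (CommRingCat.of B₁)).residueField x :=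
    ((Scheme.ΓSpecIso (CommRingCat.of B₁)).inv ≫
      (Spec (CommRingCat.of B₁)).Γevaluation x).hom
  have hall : ∀ b : B₁, ev b ∈ (s.residueFieldMap x).hom.range := by
    intro b
    have hb : b ∈ Algebra.adjoin B₀ (T : Set B₁) := by rw [hT]; trivial
    induction hb using Algebra.adjoin_induction with
    | mem b hb => exact hWb _ x (hx' b hb)
    | algebraMap r =>
      have e : CommRingCat.ofHom (algebraMap B₀ B₁) ≫
          (Scheme.ΓSpecIso (CommRingCat.of B₁)).inv =
          (Scheme.ΓSpecIso (CommRingCat.of B₀)).inv ≫ p.appTop ≫ s.appTop := by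
        rw [Scheme.ΓSpecIso_inv_naturality, ← hover, Scheme.Hom.comp_appTop]
      refine ⟨𝒮.Γevaluation (s x) (p.appTop ((Scheme.ΓSpecIso (CommRingCat.of B₀)).inv r)), ?_⟩
      refine (Scheme.Γevaluation_naturality_apply s x _).trans ?_
      exact congrArg ((Spec (CommRingCat.of B₁)).Γevaluation x)
        (ConcreteCategory.congr_hom e r).symm
    | add a b _ _ ha hb => rw [map_add]; exact add_mem ha hb
    | mul a b _ _ ha hb => rw [map_mul]; exact mul_mem ha hb
  rw [ConcreteCategory.isIso_iff_bijective]
  refine ⟨(s.residueFieldMap x).hom.injective, fun z => ?_⟩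
  obtain ⟨a, b, rfl⟩ := residue_spec_frac (CommRingCat.of B₁) x z
  obtain ⟨u, hu⟩ := hall a
  obtain ⟨v, hv⟩ := hall b
  refine ⟨u / v, ?_⟩
  refine (map_div₀ (s.residueFieldMap x).hom u v).trans ?_
  rw [hu, hv]
  rfl
end
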